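/- Let a ≥ b > 0 and c > 0 satisfy Δ < −1, where Δ := (a²+b²−c²)/(2ab). Let ζ > 0 be defined by Δ = −cosh(ζ), and let θ ∈ (0,π) be the unique solution of a·sinh(θζ/π) = b·sinh((1−θ/π)ζ). Then the per-site free energy f(a,b,c) exists and f(a,b,c) = log a + ζθ/π + Σ_{n=1}^{∞} (e^{−nζ}/n) · sinh(2nζθ/π)/cosh(nζ). -/

import Mathlib

open MeasureTheory Filter
open scoped Real BigOperators

noncomputable section

namespace SixVertexFE

/-- Configurations on the `N × M` torus: each vertex `v` carries a horizontal edge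
(from `v` to `v+(1,0)`) and a vertical edge (from `v` to `v+(0,1)`).
First component: `true` = the horizontal edge points East.
Second component: `true` = the vertical edge points North. -/
abbrev Cfg (N M : ℕ) := ((Fin N × Fin M) → Bool) × ((Fin N × Fin M) → Bool)

/-- the predecessor (`i - 1`) on the discrete circle `Fin N`. -/
def predF {N : ℕ} (i : Fin N) : Fin N := ⟨(i.1 + (N - 1)) % N, Nat.mod_lt _ i.pos⟩

/-- number of edges incident to `v` that point towards `v`. -/
abbrev inArrows {N M : ℕ} (ω : Cfg N M) (v : Fin N × Fin M) : ℕ :=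
  (if ω.1 (predF v.1, v.2) = true then 1 else 0) +
  (if ω.1 v = false then 1 else 0) +
  (if ω.2 (v.1, predF v.2) = true then 1 else 0) +
  (if ω.2 v = false then 1 else 0)

/-- the ice rule: exactly two incoming arrows at every vertex. -/
abbrev IsSixVertex {N M : ℕ} (ω : Cfg N M) : Prop := ∀ v, inArrows ω v = 2

/-- weight of a vertex: `c` if the two horizontal edges at `v` point in opposite
directions, `a` for all-East-all-North or all-West-all-South, `b` for
all-East-all-South or all-West-all-North. -/
def vWeight (a b c : ℝ) {N M : ℕ} (ω : Cfg N M) (v : Fin N × Fin M) : ℝ :=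
  if ω.1 (predF v.1, v.2) ≠ ω.1 v then c
  else if (ω.1 (predF v.1, v.2) = true ∧ ω.1 v = true ∧
            ω.2 (v.1, predF v.2) = true ∧ ω.2 v = true) ∨
          (ω.1 (predF v.1, v.2) = false ∧ ω.1 v = false ∧
            ω.2 (v.1, predF v.2) = false ∧ ω.2 v = false) then a
  else if (ω.1 (predF v.1, v.2) = true ∧ ω.1 v = true ∧
            ω.2 (v.1, predF v.2) = false ∧ ω.2 v = false) ∨
          (ω.1 (predF v.1, v.2) = false ∧ ω.1 v = false ∧
            ω.2 (v.1, predF v.2) = true ∧ ω.2 v = true) then b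
  else 0

/-- weight of a configuration. -/
def W (a b c : ℝ) {N M : ℕ} (ω : Cfg N M) : ℝ := ∏ v, vWeight a b c ω v

/-- partition function of the six-vertex model on the `N × M` torus. -/
def Z (N M : ℕ) (a b c : ℝ) : ℝ :=
  ∑ ω : Cfg N M, if IsSixVertex ω then W a b c ω else 0

/-- number of North-pointing vertical edges in row `j`. -/
abbrev RowCount {N M : ℕ} (ω : Cfg N M) (j : Fin M) : ℕ :=
  (Finset.univ.filter fun i : Fin N => ω.2 (i, j) = true).card

/-- partition function restricted to configurations with exactly `n` up arrows per row. -/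
def Zn (N M n : ℕ) (a b c : ℝ) : ℝ :=
  ∑ ω : Cfg N M, if IsSixVertex ω ∧ (∀ j, RowCount ω j = n) then W a b c ω else 0

/-- `F` is the per-site free energy of the six-vertex model with weights `a, b, c`:
the inner limit in `M` exists for every even `N ≥ 2`, and the resulting quantities
converge to `F` as `N → ∞` along even `N`. -/
def FreeEnergyIs (a b c F : ℝ) : Prop :=
  ∃ g : ℕ → ℝ,
    (∀ N : ℕ, Even N → 2 ≤ N →
      Tendsto (fun M : ℕ => Real.log (Z N M a b c) / (M * N)) atTop (nhds (g N))) ∧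
    Tendsto g (atTop ⊓ Filter.principal {N | Even N}) (nhds F)

/-- `L = f_N^{(n)}(a,b,c)`, the free energy of the six-vertex model in the sector
with `n` up arrows per row. -/
def SectorFE (N n : ℕ) (a b c L : ℝ) : Prop :=
  Tendsto (fun M : ℕ => Real.log (Zn N M n a b c) / (N * M)) atTop (nhds L)

end SixVertexFE

namespace SixVertexFE
open Matrix
open scoped Kronecker

section Algebra
variable {A B : Type} [Fintype A] [DecidableEq A] [Fintype B] [DecidableEq B]

def mono (L : Bool → Bool → Matrix A A ℂ) {N : ℕ} (σ τ : Fin N → Bool) : Matrix A A ℂ :=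
  (List.ofFn fun i => L (σ i) (τ i)).prod

def TM (L : Bool → Bool → Matrix A A ℂ) (N : ℕ) :
    Matrix (Fin N → Bool) (Fin N → Bool) ℂ :=
  Matrix.of fun σ τ => (mono L σ τ).trace

lemma mono_succ (L : Bool → Bool → Matrix A A ℂ) {N : ℕ} (σ τ : Fin (N+1) → Bool) :
    mono L σ τ = L (σ 0) (τ 0) * mono L (Fin.tail σ) (Fin.tail τ) := by
  simp [mono, List.ofFn_succ, Fin.tail]

lemma mono_zero (L : Bool → Bool → Matrix A A ℂ) (σ τ : Fin 0 → Bool) :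
    mono L σ τ = 1 := by simp [mono]

lemma sum_fin_succ {ι R : Type*} [Fintype ι] [AddCommMonoid R] {n : ℕ}
    (f : (Fin (n+1) → ι) → R) :
    ∑ ρ, f ρ = ∑ r : ι, ∑ ρ : Fin n → ι, f (Fin.cons r ρ) := by
  rw [← (Fin.consEquiv (fun _ : Fin (n+1) => ι)).sum_comp, Fintype.sum_prod_type]
  rfl

lemma sum_prod_ofFn {ι R : Type*} [Fintype ι] [Semiring R] {n : ℕ} (C : Fin n → ι → R) :
    ∑ ρ : Fin n → ι, (List.ofFn fun i => C i (ρ i)).prod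
      = (List.ofFn fun i => ∑ r, C i r).prod := by
  induction n with
  | zero => simp
  | succ n ih =>
    rw [sum_fin_succ]
    simp only [List.ofFn_succ, List.prod_cons, Fin.cons_zero, Fin.cons_succ]
    rw [Finset.sum_mul, ← ih]
    simp only [Finset.mul_sum]

lemma mono_kron (L : Bool → Bool → Matrix A A ℂ) (L' : Bool → Bool → Matrix B B ℂ) {N : ℕ}
    (σ ρ τ : Fin N → Bool) :
    (mono L σ ρ) ⊗ₖ (mono L' ρ τ)
      = (List.ofFn fun i => (L (σ i) (ρ i)) ⊗ₖ (L' (ρ i) (τ i))).prod := by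
  induction N with
  | zero => simp [mono]
  | succ n ih =>
    rw [mono_succ, mono_succ, Matrix.mul_kronecker_mul, ih, List.ofFn_succ, List.prod_cons]
    rfl

def starOp (L : Bool → Bool → Matrix A A ℂ) (L' : Bool → Bool → Matrix B B ℂ) :
    Bool → Bool → Matrix (A × B) (A × B) ℂ :=
  fun s t => ∑ r, (L s r) ⊗ₖ (L' r t)

lemma TM_mul (L : Bool → Bool → Matrix A A ℂ) (L' : Bool → Bool → Matrix B B ℂ) (N : ℕ) :
    TM L N * TM L' N = TM (starOp L L') N := by
  ext σ τ
  simp only [Matrix.mul_apply, TM, Matrix.of_apply, mono, starOp]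
  rw [← sum_prod_ofFn (fun i r => (L (σ i) r) ⊗ₖ (L' r (τ i))), Matrix.trace_sum]
  refine Finset.sum_congr rfl fun ρ _ => ?_
  rw [← mono_kron, Matrix.trace_kronecker]
  rfl

lemma TM_gauge (L : Bool → Bool → Matrix A A ℂ) (L' : Bool → Bool → Matrix B B ℂ)
    (G : Matrix B A ℂ) (H : Matrix A B ℂ) (h1 : G * H = 1) (h2 : H * G = 1)
    (h : ∀ s t, L' s t * G = G * L s t) (N : ℕ) : TM L' N = TM L N := by
  ext σ τ
  have key : ∀ (N : ℕ) (σ τ : Fin N → Bool), mono L' σ τ * G = G * mono L σ τ := by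
    intro N
    induction N with
    | zero => intro σ τ; simp [mono_zero]
    | succ n ih =>
      intro σ τ
      rw [mono_succ, mono_succ, Matrix.mul_assoc, ih, ← Matrix.mul_assoc, h, Matrix.mul_assoc]
  simp only [TM, Matrix.of_apply]
  calc (mono L' σ τ).trace = (mono L' σ τ * (G * H)).trace := by rw [h1, Matrix.mul_one]
    _ = (G * (mono L σ τ * H)).trace := by rw [← Matrix.mul_assoc, key, Matrix.mul_assoc]
    _ = (mono L σ τ).trace := by rw [Matrix.trace_mul_comm, Matrix.mul_assoc, h2, Matrix.mul_one]

lemma TM_smul (L : Bool → Bool → Matrix A A ℂ) (c : ℂ) (N : ℕ) :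
    TM (fun s t => c • L s t) N = c ^ N • TM L N := by
  have key : ∀ (N : ℕ) (σ τ : Fin N → Bool),
      mono (fun s t => c • L s t) σ τ = c ^ N • mono L σ τ := by
    intro N
    induction N with
    | zero => intro σ τ; simp [mono_zero]
    | succ n ih =>
      intro σ τ
      rw [mono_succ, mono_succ, ih, Matrix.smul_mul, Matrix.mul_smul, smul_smul, pow_succ']
  ext σ τ
  simp [TM, key]

lemma TM_block (L : Bool → Bool → Matrix (A ⊕ B) (A ⊕ B) ℂ) (P : Bool → Bool → Matrix A A ℂ)
    (R : Bool → Bool → Matrix B B ℂ)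
    (h11 : ∀ s t, (L s t).toBlocks₁₁ = P s t) (h21 : ∀ s t, (L s t).toBlocks₂₁ = 0)
    (h22 : ∀ s t, (L s t).toBlocks₂₂ = R s t) (N : ℕ) :
    TM L N = TM P N + TM R N := by
  have key : ∀ (N : ℕ) (σ τ : Fin N → Bool),
      (mono L σ τ).toBlocks₁₁ = mono P σ τ ∧ (mono L σ τ).toBlocks₂₁ = 0 ∧
      (mono L σ τ).toBlocks₂₂ = mono R σ τ := by
    intro N
    induction N with
    | zero =>
      intro σ τ; simp only [mono_zero]
      refine ⟨?_, ?_, ?_⟩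
      · ext i j; simp [Matrix.toBlocks₁₁, Matrix.one_apply]
      · ext i j; simp [Matrix.toBlocks₂₁]
      · ext i j; simp [Matrix.toBlocks₂₂, Matrix.one_apply]
    | succ n ih =>
      intro σ τ
      obtain ⟨i1, i2, i3⟩ := ih (Fin.tail σ) (Fin.tail τ)
      rw [mono_succ, mono_succ, mono_succ, ← i1, ← i3, ← h11, ← h22]
      have e1 := (Matrix.fromBlocks_toBlocks (L (σ 0) (τ 0))).symm
      have e2 := (Matrix.fromBlocks_toBlocks (mono L (Fin.tail σ) (Fin.tail τ))).symm
      rw [h21] at e1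
      rw [i2] at e2
      rw [e1, e2, Matrix.fromBlocks_multiply]
      simp
  ext σ τ
  obtain ⟨i1, i2, i3⟩ := key N σ τ
  simp only [TM, Matrix.of_apply, Matrix.add_apply, ← i1, ← i3]
  simp [Matrix.trace, Fintype.sum_sum_type, Matrix.toBlocks₁₁, Matrix.toBlocks₂₂]

lemma TM_unit (f : ℂ) (N : ℕ) :
    TM (fun s t => if s = t then (f • (1 : Matrix Unit Unit ℂ)) else 0) N = f ^ N • 1 := by
  have key : ∀ (N : ℕ) (σ τ : Fin N → Bool),
      mono (fun s t => if s = t then (f • (1 : Matrix Unit Unit ℂ)) else 0) σ τ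
        = if σ = τ then f ^ N • 1 else 0 := by
    intro N
    induction N with
    | zero => intro σ τ; simp [mono_zero, Subsingleton.elim σ τ]
    | succ n ih =>
      intro σ τ
      rw [mono_succ, ih]
      by_cases h0 : σ 0 = τ 0
      · by_cases h1 : Fin.tail σ = Fin.tail τ
        · have : σ = τ := by rw [← Fin.cons_self_tail σ, ← Fin.cons_self_tail τ, h0, h1]
          simp [this, pow_succ', smul_smul, mul_comm]
        · have : σ ≠ τ := by rintro rfl; exact h1 rfl
          simp [this, h1]
      · have : σ ≠ τ := by rintro rfl; exact h0 rfl
        simp [this, h0]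
  ext σ τ
  simp only [TM, Matrix.of_apply, key, Matrix.smul_apply, Matrix.one_apply]
  split_ifs <;> simp

lemma TM_transpose (L : Bool → Bool → Matrix A A ℂ) (N : ℕ) :
    (TM L N)ᵀ = TM (fun s t => L t s) N := rfl

lemma TM_map (L : Bool → Bool → Matrix A A ℂ) (N : ℕ) :
    (TM L N).map (starRingEnd ℂ) = TM (fun s t => (L s t).map (starRingEnd ℂ)) N := by
  have key : ∀ (N : ℕ) (σ τ : Fin N → Bool),
      mono (fun s t => (L s t).map (starRingEnd ℂ)) σ τ = (mono L σ τ).map (starRingEnd ℂ) := by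
    intro N
    induction N with
    | zero =>
      intro σ τ
      simp [mono_zero, Matrix.map_one]
    | succ n ih =>
      intro σ τ
      rw [mono_succ, mono_succ, ih, Matrix.map_mul]
  ext σ τ
  simp [TM, key, Matrix.trace]

/-- unitarity of the monodromy -/
lemma mono_unitary (L : Bool → Bool → Matrix A A ℂ) (r : ℝ)
    (hL : ∀ s s', ∑ t, L s t * (L s' t)ᴴ = if s = s' then (r : ℂ) • 1 else 0) (N : ℕ)
    (σ σ' : Fin N → Bool) :
    ∑ τ, mono L σ τ * (mono L σ' τ)ᴴ = if σ = σ' then ((r ^ N : ℝ) : ℂ) • 1 else 0 := by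
  induction N with
  | zero => simp [mono_zero, Subsingleton.elim σ σ']
  | succ n ih =>
    rw [sum_fin_succ]
    have : ∀ t : Bool, ∑ τ : Fin n → Bool, mono L σ (Fin.cons t τ) * (mono L σ' (Fin.cons t τ))ᴴ
        = L (σ 0) t * (if Fin.tail σ = Fin.tail σ' then ((r ^ n : ℝ) : ℂ) • 1 else 0)
            * (L (σ' 0) t)ᴴ := by
      intro t
      rw [← ih, Finset.mul_sum, Finset.sum_mul]
      refine Finset.sum_congr rfl fun τ _ => ?_
      rw [mono_succ, mono_succ, Matrix.conjTranspose_mul]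
      simp [Matrix.mul_assoc]
    simp only [this]
    by_cases h1 : Fin.tail σ = Fin.tail σ'
    · simp only [h1, if_true, Matrix.mul_smul, Matrix.mul_one, Matrix.smul_mul]
      rw [← Finset.smul_sum, hL]
      by_cases h0 : σ 0 = σ' 0
      · have : σ = σ' := by rw [← Fin.cons_self_tail σ, ← Fin.cons_self_tail σ', h0, h1]
        subst this
        simp only [if_true]
        rw [smul_smul]
        push_cast
        rw [pow_succ]
      · have : σ ≠ σ' := by rintro rfl; exact h0 rfl
        simp [this, h0]
    · have : σ ≠ σ' := by rintro rfl; exact h1 rfl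
      simp [this, h1]

end Algebra
end SixVertexFE

namespace SixVertexFE
open Matrix
open scoped Kronecker

/-- local six-vertex operator -/
def Lw (a b c : ℂ) (s s' : Bool) : Matrix Bool Bool ℂ :=
  Matrix.of fun h h' => if h = h' then (if s = s' then (if h = s then a else b) else 0)
    else (if h = s' ∧ h' = s then c else 0)

def Lz (ζ : ℝ) (t : ℂ) : Bool → Bool → Matrix Bool Bool ℂ :=
  Lw (Complex.sinh (ζ - t)) (Complex.sinh t) (Complex.sinh ζ)

def Tz (N : ℕ) (ζ : ℝ) (t : ℂ) : Matrix (Fin N → Bool) (Fin N → Bool) ℂ := TM (Lz ζ t) N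

/-- flip -/
def Xm : Matrix Bool Bool ℂ := Matrix.of fun h h' => if h = h' then 0 else 1

lemma Xm_sq : Xm * Xm = 1 := by
  ext i j; cases i <;> cases j <;> simp [Xm, Matrix.mul_apply]

lemma Lw_cross (a b c : ℂ) (s s' : Bool) : Lw b a c s s' * Xm = Xm * Lw a b c s' s := by
  ext i j; cases i <;> cases j <;> cases s <;> cases s' <;> simp [Xm, Lw, Matrix.mul_apply]

lemma Tz_transpose (N : ℕ) (ζ : ℝ) (t : ℂ) : Tz N ζ (ζ - t) = (Tz N ζ t)ᵀ := by
  unfold Tz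
  rw [TM_transpose]
  refine TM_gauge _ _ Xm Xm Xm_sq Xm_sq (fun s s' => ?_) N
  unfold Lz
  rw [sub_sub_cancel, Lw_cross]

lemma Lw_map (a b c : ℂ) (s s' : Bool) : (Lw a b c s s').map (starRingEnd ℂ)
    = Lw (starRingEnd ℂ a) (starRingEnd ℂ b) (starRingEnd ℂ c) s s' := by
  ext i j; cases i <;> cases j <;> cases s <;> cases s' <;> simp [Lw]

lemma Tz_conj (N : ℕ) (ζ : ℝ) (t : ℂ) :
    (Tz N ζ t)ᴴ = Tz N ζ (ζ - starRingEnd ℂ t) := by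
  rw [Tz_transpose]
  have : (Tz N ζ t)ᴴ = ((Tz N ζ t).map (starRingEnd ℂ))ᵀ := rfl
  rw [this]
  congr 1
  unfold Tz
  rw [TM_map]
  congr 1
  ext1 s; ext1 s'
  unfold Lz
  rw [Lw_map, ← Complex.sinh_conj, ← Complex.sinh_conj, ← Complex.sinh_conj]
  simp

def Zm : Matrix Bool Bool ℂ := Matrix.of fun h h' => if h = h' then (if h then 1 else -1) else 0

lemma Zm_sq : Zm * Zm = 1 := by
  ext i j; cases i <;> cases j <;> simp [Zm, Matrix.mul_apply]

lemma Lw_neg (a b c : ℂ) (s s' : Bool) : Lw (-a) (-b) c s s' * Zm = Zm * ((-1 : ℂ) • Lw a b c s s') := by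
  ext i j; cases i <;> cases j <;> cases s <;> cases s' <;> simp [Zm, Lw, Matrix.mul_apply]

lemma Tz_period (N : ℕ) (hN : Even N) (ζ : ℝ) (t : ℂ) :
    Tz N ζ (t + π * Complex.I) = Tz N ζ t := by
  have h1 : TM (fun s s' => (-1 : ℂ) • Lz ζ t s s') N = Tz N ζ t := by
    rw [TM_smul, hN.neg_one_pow, one_smul]; rfl
  rw [← h1]
  refine TM_gauge _ _ Zm Zm Zm_sq Zm_sq (fun s s' => ?_) N
  unfold Lz
  have e1 : Complex.sinh (ζ - (t + π * Complex.I)) = - Complex.sinh (ζ - t) := by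
    rw [show (ζ : ℂ) - (t + π * Complex.I) = (ζ - t) - π * Complex.I by ring, Complex.sinh_sub]
    simp [Complex.sinh_mul_I, Complex.cosh_mul_I]
  have e2 : Complex.sinh (t + π * Complex.I) = - Complex.sinh t := by
    rw [Complex.sinh_add]
    simp [Complex.sinh_mul_I, Complex.cosh_mul_I]
  rw [e1, e2, Lw_neg]

/-- the R-check matrix -/
def Rc (a b c : ℂ) : Matrix (Bool × Bool) (Bool × Bool) ℂ :=
  Matrix.of fun p q => if p.1 = p.2 then (if p = q then a else 0)
    else (if p = q then c else if p = (q.2, q.1) then b else 0)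

lemma Rc_mul (a b c a' b' : ℂ) (h1 : a * a' = c * c + b * b') (h2 : b' = - b) :
    Rc a b c * Rc a' b' c = (a * a') • 1 := by
  ext ⟨i, i'⟩ ⟨j, j'⟩
  cases i <;> cases j <;> cases i' <;> cases j' <;>
    simp [Rc, Matrix.mul_apply, Fintype.sum_prod_type, h1, h2] <;> ring

lemma starOp_apply {A B : Type} (L : Bool → Bool → Matrix A A ℂ) (L' : Bool → Bool → Matrix B B ℂ)
    [Fintype A] [DecidableEq A] [Fintype B] [DecidableEq B]
    (s s' : Bool) (i j : A) (i' j' : B) :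
    starOp L L' s s' (i, i') (j, j')
      = L s true i j * L' true s' i' j' + L s false i j * L' false s' i' j' := by
  simp [starOp, Matrix.add_apply]

lemma mul4 (M P : Matrix (Bool × Bool) (Bool × Bool) ℂ) (p q : Bool × Bool) :
    (M * P) p q = M p (true, true) * P (true, true) q + M p (true, false) * P (true, false) q
      + M p (false, true) * P (false, true) q + M p (false, false) * P (false, false) q := by
  simp [Matrix.mul_apply, Fintype.sum_prod_type]; ring

lemma ybe (a b c a' b' A B : ℂ) (h1 : a' * b = B * c + a * b') (h2 : a' * A = B * b' + a * c)
    (h3 : b * A = c * b' + B * a) (s s' : Bool) :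
    starOp (Lw a' b' c) (Lw a b c) s s' * Rc A B c
      = Rc A B c * starOp (Lw a b c) (Lw a' b' c) s s' := by
  ext ⟨i, i'⟩ ⟨j, j'⟩
  rw [mul4, mul4]
  simp only [starOp_apply, Rc, Lw, Matrix.of_apply]
  cases s <;> cases s' <;>
  cases i <;> cases j <;> cases i' <;> cases j' <;>
    simp <;>
    first
    | ring1
    | linear_combination c * h1
    | linear_combination -c * h1
    | linear_combination c * h2
    | linear_combination -c * h2
    | linear_combination c * h3
    | linear_combination -c * h3

lemma sinh_mul_sinh (p q : ℂ) : Complex.sinh p * Complex.sinh q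
    = (Complex.cosh (p + q) - Complex.cosh (p - q)) / 2 := by
  rw [Complex.cosh_add, Complex.cosh_sub]; ring

lemma Tz_comm (N : ℕ) (ζ : ℝ) (u v : ℂ)
    (hne : Complex.sinh (ζ - (u - v)) * Complex.sinh (ζ + (u - v)) ≠ 0) :
    Tz N ζ u * Tz N ζ v = Tz N ζ v * Tz N ζ u := by
  unfold Tz
  rw [TM_mul, TM_mul]
  symm
  set r := Complex.sinh (ζ - (u - v)) * Complex.sinh (ζ + (u - v)) with hr
  have hrel : r = Complex.sinh ζ * Complex.sinh ζ
      + Complex.sinh (u - v) * (-Complex.sinh (u - v)) := by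
    rw [hr, mul_neg, sinh_mul_sinh, sinh_mul_sinh, sinh_mul_sinh,
      show (ζ : ℂ) - (u - v) + (ζ + (u - v)) = ζ + ζ by ring,
      show (ζ : ℂ) - (u - v) - (ζ + (u - v)) = -((u - v) + (u - v)) by ring, Complex.cosh_neg]
    simp; ring
  have key := Rc_mul (Complex.sinh (ζ - (u - v))) (Complex.sinh (u - v)) (Complex.sinh ζ)
    (Complex.sinh (ζ + (u - v))) (-Complex.sinh (u - v)) hrel rfl
  have key2 := Rc_mul (Complex.sinh (ζ + (u - v))) (-Complex.sinh (u - v)) (Complex.sinh ζ)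
    (Complex.sinh (ζ - (u - v))) (Complex.sinh (u - v)) (by rw [mul_comm, ← hr, hrel]; ring) (by ring)
  rw [← hr] at key
  rw [mul_comm, ← hr] at key2
  refine TM_gauge _ _ (Rc (Complex.sinh (ζ - (u - v))) (Complex.sinh (u - v)) (Complex.sinh ζ))
    (r⁻¹ • Rc (Complex.sinh (ζ + (u - v))) (-Complex.sinh (u - v)) (Complex.sinh ζ)) ?_ ?_ ?_ N
  · rw [Matrix.mul_smul, key, smul_smul, inv_mul_cancel₀ hne, one_smul]
  · rw [Matrix.smul_mul, key2, smul_smul, inv_mul_cancel₀ hne, one_smul]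
  · intro s s'
    unfold Lz
    apply ybe
    · rw [sinh_mul_sinh, sinh_mul_sinh, sinh_mul_sinh,
        show u - v - (ζ : ℂ) = -(ζ - u + v) by ring, Complex.cosh_neg,
        show u - v + (ζ : ℂ) = ζ - v + u by ring,
        show (ζ : ℂ) - v - u = ζ - u - v by ring]; ring
    · rw [sinh_mul_sinh, sinh_mul_sinh, sinh_mul_sinh,
        show (ζ : ℂ) - v - (ζ - (u - v)) = (u - v - v) by ring,
        show (ζ : ℂ) - u - ζ = - (u - v + v) by ring, Complex.cosh_neg,
        show (ζ : ℂ) - v + (ζ - (u - v)) = ζ - u + ζ by ring]; ring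
    · rw [sinh_mul_sinh, sinh_mul_sinh, sinh_mul_sinh,
        show u + ((ζ : ℂ) - (u - v)) = ζ + v by ring,
        show u - v - ((ζ : ℂ) - u) = u - (ζ - (u - v)) by ring,
        show u - v + ((ζ : ℂ) - u) = ζ - v by ring]; ring

lemma normSq_sinh_aux (x y : ℝ) : ‖Complex.sinh (x + y * Complex.I)‖ ^ 2
    = Real.sinh x ^ 2 + Real.sin y ^ 2 := by
  rw [Complex.sinh_add, Complex.sinh_mul_I, Complex.cosh_mul_I, ← Complex.ofReal_sinh,
    ← Complex.ofReal_cosh, ← Complex.ofReal_sin, ← Complex.ofReal_cos, ← Complex.normSq_eq_norm_sq]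
  rw [show (↑(Real.sinh x) * ↑(Real.cos y) + ↑(Real.cosh x) * (↑(Real.sin y) * Complex.I) : ℂ)
    = (↑(Real.sinh x * Real.cos y) + ↑(Real.cosh x * Real.sin y) * Complex.I) by push_cast; ring,
    Complex.normSq_add_mul_I]
  have h1 := Real.sin_sq_add_cos_sq y
  have h2 := Real.cosh_sq x
  rw [mul_pow, mul_pow, h2]
  linear_combination (Real.sinh x ^ 2) * h1

lemma sinh_ne_zero_of_re {z : ℂ} (h : z.re ≠ 0) : Complex.sinh z ≠ 0 := by
  intro h0
  have := normSq_sinh_aux z.re z.im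
  rw [Complex.re_add_im, h0] at this
  simp at this
  have h1 : 0 < Real.sinh z.re ^ 2 := by
    have : Real.sinh z.re ≠ 0 := fun hh => h (Real.sinh_eq_zero.1 hh)
    positivity
  nlinarith [sq_nonneg (Real.sin z.im)]

lemma Tz_comm_line (N : ℕ) (ζ : ℝ) (hζ : 0 < ζ) (u v : ℂ) (h : u.re = v.re) :
    Tz N ζ u * Tz N ζ v = Tz N ζ v * Tz N ζ u := by
  apply Tz_comm
  apply mul_ne_zero <;> apply sinh_ne_zero_of_re <;> simp [h, hζ.ne']

end SixVertexFE

namespace SixVertexFE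
open Matrix
open scoped Kronecker

def Gf (g : ℂ) : Matrix (Unit ⊕ Fin 3) (Bool × Bool) ℂ :=
  Matrix.of fun r p => match r, p with
    | Sum.inl _, (false, false) => 1
    | Sum.inr 0, (true, false) => 1
    | Sum.inr 1, (false, true) => 1
    | Sum.inr 2, (true, true) => g
    | Sum.inr 2, (false, false) => -g
    | _, _ => 0

def Hf (gi : ℂ) : Matrix (Bool × Bool) (Unit ⊕ Fin 3) ℂ :=
  Matrix.of fun p r => match r, p with
    | Sum.inl _, (false, false) => 1
    | Sum.inl _, (true, true) => 1
    | Sum.inr 0, (true, false) => 1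
    | Sum.inr 1, (false, true) => 1
    | Sum.inr 2, (true, true) => gi
    | _, _ => 0

def Kf (a a' b κ : ℂ) : Bool → Bool → Matrix (Fin 3) (Fin 3) ℂ
  | true, true => !![-a, 0, 0; 0, a', 0; 0, 0, -b]
  | false, false => !![a', 0, 0; 0, -a, 0; 0, 0, -b]
  | false, true => !![0, 0, κ; 0, 0, 0; 0, κ, 0]
  | true, false => !![0, 0, 0; 0, 0, -κ; -κ, 0, 0]

lemma mul4' {X Y : Type*} (M : Matrix X (Bool × Bool) ℂ) (P : Matrix (Bool × Bool) Y ℂ) (p : X) (q : Y) :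
    (M * P) p q = M p (true, true) * P (true, true) q + M p (true, false) * P (true, false) q
      + M p (false, true) * P (false, true) q + M p (false, false) * P (false, false) q := by
  simp [Matrix.mul_apply, Fintype.sum_prod_type]; ring

lemma GfHf (g gi : ℂ) (h : g * gi = 1) : Gf g * Hf gi = 1 := by
  ext i j
  rw [mul4']
  rcases i with i | i <;> rcases j with j | j
  · simp [Gf, Hf]
  · fin_cases j <;> simp [Gf, Hf]
  · fin_cases i <;> simp [Gf, Hf]
  · fin_cases i <;> fin_cases j <;> simp [Gf, Hf, h]

lemma HfGf (g gi : ℂ) (h : g * gi = 1) : Hf gi * Gf g = 1 := by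
  have h' : gi * g = 1 := by rw [mul_comm]; exact h
  ext ⟨i, i'⟩ ⟨j, j'⟩
  cases i <;> cases j <;> cases i' <;> cases j' <;>
    simp [Gf, Hf, Matrix.mul_apply, Fin.sum_univ_three, h']

lemma fusion_alg (a a' b c g gi : ℂ) (h : g * gi = 1) (h1 : a * a' = c ^ 2 - b ^ 2)
    (h2 : (a' - a) * g ^ 2 = b) (N : ℕ) :
    TM (Lw a b c) N * TM (fun s s' => Lw a' (-b) c s' s) N
      = (a * a') ^ N • 1 + b ^ N • TM (Kf a a' b (c * gi)) N := by
  rw [TM_mul, ← TM_unit, ← TM_smul]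
  set D := starOp (Lw a b c) (fun s s' => Lw a' (-b) c s' s) with hD
  have hG := GfHf g gi h
  have hH := HfGf g gi h
  have h3 : a' - a = b * gi ^ 2 := by
    rw [← h2, mul_assoc, ← mul_pow, h]; ring
  rw [← TM_gauge D (fun s s' => Gf g * D s s' * Hf gi) (Gf g) (Hf gi) hG hH
    (fun s s' => by rw [Matrix.mul_assoc, hH, Matrix.mul_one])]
  have h4 : a * a' + b^2 = c^2 := by rw [h1]; ring
  have h5 : g * (a' - a) = b * gi := by
    linear_combination gi * h2 - (a' - a) * g * h
  apply TM_block
  · intro s s'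
    ext i j
    simp only [Matrix.toBlocks₁₁, Matrix.of_apply]
    rw [mul4', mul4', mul4', mul4', mul4']
    simp only [hD, starOp_apply]
    cases s <;> cases s' <;> simp [Gf, Hf, Lw]
    · linear_combination -h1
  · intro s s'
    ext i j
    simp only [Matrix.toBlocks₂₁, Matrix.of_apply]
    rw [mul4', mul4', mul4', mul4', mul4']
    simp only [hD, starOp_apply]
    cases s <;> cases s' <;> fin_cases i <;> simp [Gf, Hf, Lw]
    · linear_combination (-g) * h1
    · ring
    · ring
    · linear_combination g * h1
  · intro s s'
    ext i j
    simp only [Matrix.toBlocks₂₂, Matrix.of_apply, Matrix.smul_apply]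
    rw [mul4', mul4', mul4', mul4', mul4']
    simp only [hD, starOp_apply]
    cases s <;> cases s' <;> fin_cases i <;> fin_cases j <;> simp [Gf, Hf, Lw, Kf]
    · ring
    · linear_combination (b * b) * h
    · ring
    · linear_combination c * h5
    · ring
    · linear_combination (-c) * h5
    · ring
    · linear_combination (g * gi) * h1 - b ^ 2 * h

def Kz (ζ : ℝ) (t : ℂ) : Bool → Bool → Matrix (Fin 3) (Fin 3) ℂ :=
  Kf (Complex.sinh (ζ - t)) (Complex.sinh (ζ + t)) (Complex.sinh t)
    ((Real.sinh ζ * √(2 * Real.cosh ζ) : ℝ) : ℂ)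

lemma fusion (N : ℕ) (ζ : ℝ) (t : ℂ) :
    Tz N ζ t * Tz N ζ (ζ + t)
      = (Complex.sinh (ζ - t) * Complex.sinh (ζ + t)) ^ N • 1
        + (Complex.sinh t) ^ N • TM (Kz ζ t) N := by
  have h0 : Tz N ζ (ζ + t) = TM (fun s s' => Lw (Complex.sinh (ζ + t)) (-Complex.sinh t)
      (Complex.sinh ζ) s' s) N := by
    rw [show (ζ : ℂ) + t = ζ - (-t) by ring, Tz_transpose]
    unfold Tz
    rw [TM_transpose]
    unfold Lz
    rw [Complex.sinh_neg]
  have hs : (0 : ℝ) < √(2 * Real.cosh ζ) := by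
    have := Real.cosh_pos ζ
    positivity
  have hsq : (√(2 * Real.cosh ζ)) ^ 2 = 2 * Real.cosh ζ := by
    have := Real.cosh_pos ζ
    exact Real.sq_sqrt (by positivity)
  have hsC : ((√(2 * Real.cosh ζ) : ℝ) : ℂ) ≠ 0 := by exact_mod_cast hs.ne'
  have hsqC : ((√(2 * Real.cosh ζ) : ℝ) : ℂ) ^ 2 = 2 * Complex.cosh ζ := by
    rw [← Complex.ofReal_pow, hsq]; push_cast; rfl
  rw [h0]
  unfold Tz Lz Kz
  rw [fusion_alg _ (Complex.sinh (ζ + t)) (Complex.sinh t) (Complex.sinh ζ)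
    (((√(2 * Real.cosh ζ) : ℝ) : ℂ)⁻¹) (((√(2 * Real.cosh ζ) : ℝ) : ℂ)) (inv_mul_cancel₀ hsC)]
  · push_cast; rfl
  · rw [sinh_mul_sinh, sq, sq, sinh_mul_sinh, sinh_mul_sinh,
      show (ζ : ℂ) - t + (ζ + t) = ζ + ζ by ring,
      show (ζ : ℂ) - t - (ζ + t) = -(t + t) by ring, Complex.cosh_neg]
    simp; ring
  · rw [inv_pow, hsqC, Complex.sinh_sub, Complex.sinh_add]
    have : Complex.cosh ζ ≠ 0 := by
      rw [← Complex.ofReal_cosh]; exact_mod_cast (Real.cosh_pos ζ).ne'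
    field_simp
    ring

lemma Kf_unitary (a a' b : ℂ) (κ : ℝ) (h1 : -b = starRingEnd ℂ a')
    (h2 : ‖a‖ ^ 2 = ‖a'‖ ^ 2 + κ ^ 2) (s s' : Bool) :
    ∑ t, Kf a a' b κ s t * (Kf a a' b κ s' t)ᴴ
      = if s = s' then ((‖a‖ ^ 2 : ℝ) : ℂ) • 1 else 0 := by
  have e1 : a * starRingEnd ℂ a = ((‖a‖ ^ 2 : ℝ) : ℂ) := by
    rw [Complex.mul_conj, Complex.normSq_eq_norm_sq]
  have e2 : a' * starRingEnd ℂ a' = ((‖a'‖ ^ 2 : ℝ) : ℂ) := by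
    rw [Complex.mul_conj, Complex.normSq_eq_norm_sq]
  have e3 : ((‖a'‖ ^ 2 : ℝ) : ℂ) + (κ : ℂ) ^ 2 = ((‖a‖ ^ 2 : ℝ) : ℂ) := by
    rw [h2]; push_cast; rfl
  have hb : b = - starRingEnd ℂ a' := by rw [← h1]; ring
  have hm : ∀ (M P : Matrix (Fin 3) (Fin 3) ℂ) i j, (M * Pᴴ) i j = M i 0 * starRingEnd ℂ (P j 0)
      + M i 1 * starRingEnd ℂ (P j 1) + M i 2 * starRingEnd ℂ (P j 2) := by
    intro M P i j
    simp [Matrix.mul_apply, Fin.sum_univ_three]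
  rw [Fintype.sum_bool]
  ext i j
  rw [Matrix.add_apply, hm, hm]
  subst hb
  push_cast at e1 e2 e3
  cases s <;> cases s' <;> fin_cases i <;> fin_cases j <;>
    simp [Kf] <;>
    first
    | ring1
    | linear_combination e1
    | linear_combination e2 + e3

lemma Kz_unitary (ζ : ℝ) (t : ℂ) (ht : t.re = -ζ / 2) (s s' : Bool) :
    ∑ r, Kz ζ t s r * (Kz ζ t s' r)ᴴ
      = if s = s' then ((‖Complex.sinh (ζ - t)‖ ^ 2 : ℝ) : ℂ) • 1 else 0 := by
  unfold Kz
  apply Kf_unitary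
  · rw [← Complex.sinh_conj, ← Complex.sinh_neg]
    congr 1
    apply Complex.ext
    · simp [ht]; ring
    · simp
  · have e1 : (ζ : ℂ) - t = ((3 * ζ / 2 : ℝ) : ℂ) + ((-t.im : ℝ) : ℂ) * Complex.I := by
      apply Complex.ext
      · simp [ht]; ring
      · simp
    have e2 : (ζ : ℂ) + t = ((ζ / 2 : ℝ) : ℂ) + ((t.im : ℝ) : ℂ) * Complex.I := by
      apply Complex.ext
      · simp [ht]; ring
      · simp
    rw [e1, e2, normSq_sinh_aux, normSq_sinh_aux, mul_pow, Real.sq_sqrt (by have := Real.cosh_pos ζ; positivity)]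
    have h3 : Real.sinh (3 * ζ / 2) ^ 2 - Real.sinh (ζ / 2) ^ 2 = Real.sinh ζ * Real.sinh (2 * ζ) := by
      have k1 : Real.sinh (3 * ζ / 2) = Real.sinh (ζ + ζ / 2) := by congr 1; ring
      have k2 : Real.sinh ζ = Real.sinh (ζ / 2 + ζ / 2) := by congr 1; ring
      have k3 : Real.cosh ζ = Real.cosh (ζ / 2 + ζ / 2) := by congr 1; ring
      rw [k1, Real.sinh_two_mul, Real.sinh_add ζ, k3, k2, Real.sinh_add, Real.cosh_add]
      have := Real.cosh_sq (ζ / 2)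
      set S := Real.sinh (ζ / 2)
      have h4 : Real.cosh (ζ/2) ^ 4 = (S^2+1)^2 := by rw [← this]; ring
      linear_combination S ^ 2 * h4 - 2 * S ^ 4 * this
    rw [Real.sinh_two_mul] at h3
    simp only [Real.sin_neg]
    linear_combination h3

end SixVertexFE

namespace SixVertexFE
open Matrix
open scoped Kronecker

open scoped Function in
lemma joint_diag {n ι : Type} [Fintype n] [DecidableEq n] (H : ι → Matrix n n ℂ)
    (hH : ∀ i, (H i)ᴴ = H i) (hc : ∀ i j, H i * H j = H j * H i) :
    ∃ U : Matrix n n ℂ, Uᴴ * U = 1 ∧ ∃ d : ι → n → ℂ, ∀ i, H i * U = U * diagonal (d i) := by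
  classical
  set T : ι → EuclideanSpace ℂ n →ₗ[ℂ] EuclideanSpace ℂ n := fun i => Matrix.toEuclideanLin (H i)
    with hT
  have hsym : ∀ i, (T i).IsSymmetric := fun i => Matrix.isSymmetric_toEuclideanLin_iff.mpr (hH i)
  have hcomm : Pairwise (Commute on T) := by
    intro i j _
    change T i * T j = T j * T i
    ext1 v
    apply (WithLp.ofLp_injective 2)
    simp only [Module.End.mul_apply, hT, Matrix.ofLp_toLpLin, Matrix.toLin'_apply, Matrix.mulVec_mulVec, hc i j]
  have hof := LinearMap.IsSymmetric.orthogonalFamily_iInf_eigenspaces hsym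
  set V : (ι → ℂ) → Submodule ℂ (EuclideanSpace ℂ n) :=
    fun γ => ⨅ j, Module.End.eigenspace (T j) (γ j) with hV
  have htop : iSup V = ⊤ := LinearMap.IsSymmetric.iSup_iInf_eq_top_of_commute hsym hcomm
  have hof' := hof.comp (Subtype.val_injective (p := fun γ => V γ ≠ ⊥))
  have hfin : Finite {γ // V γ ≠ ⊥} := by
    apply WellFoundedGT.finite_of_iSupIndep (iSupIndep_ne_bot.mpr hof.independent)
    intro i; exact i.2
  have : Fintype {γ // V γ ≠ ⊥} := Fintype.ofFinite _
  have hint : DirectSum.IsInternal (fun γ : {γ // V γ ≠ ⊥} => V γ) := by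
    rw [OrthogonalFamily.isInternal_iff hof', Submodule.orthogonal_eq_bot_iff]
    rw [← htop]
    exact iSup_ne_bot_subtype V
  set e := Fintype.equivFin n
  have hn : Module.finrank ℂ (EuclideanSpace ℂ n) = Fintype.card n := finrank_euclideanSpace
  set b := (hint.subordinateOrthonormalBasis hn hof').reindex e.symm with hb
  have hmem : ∀ j, ∃ γ : ι → ℂ, b j ∈ V γ := fun j =>
    ⟨_, by
      rw [hb, OrthonormalBasis.reindex_apply]
      exact hint.subordinateOrthonormalBasis_subordinate hn _ hof'⟩
  choose γ hγ using hmem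
  refine ⟨Matrix.of fun σ j => b j σ, ?_, fun i j => γ j i, ?_⟩
  · ext i j
    have := b.orthonormal
    rw [orthonormal_iff_ite] at this
    rw [Matrix.one_apply, ← this i j, PiLp.inner_apply]
    simp [Matrix.mul_apply, mul_comm]
  · intro i
    ext σ j
    have h1 := hγ j
    simp only [hV, Submodule.mem_iInf] at h1
    have h2 := h1 i
    rw [Module.End.mem_eigenspace_iff] at h2
    have h3 := congrArg (fun v => v.ofLp σ) h2
    simp only [hT, Matrix.ofLp_toLpLin, Matrix.toLin'_apply] at h3
    rw [Matrix.mul_diagonal]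
    simpa [Matrix.mul_apply, Matrix.mulVec, dotProduct, mul_comm] using h3

abbrev J (N : ℕ) := Fin N → Bool

/-- entrywise analyticity -/
lemma TM_differentiable {A : Type} [Fintype A] [DecidableEq A]
    (L : ℂ → Bool → Bool → Matrix A A ℂ) (hL : ∀ s s' i j, Differentiable ℂ fun t => L t s s' i j)
    (N : ℕ) (σ τ : J N) : Differentiable ℂ fun t => TM (L t) N σ τ := by
  have key : ∀ (N : ℕ) (σ τ : Fin N → Bool) i j, Differentiable ℂ fun t => mono (L t) σ τ i j := by
    intro N
    induction N with
    | zero => intro σ τ i j; simp only [mono_zero]; fun_prop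
    | succ n ih =>
      intro σ τ i j
      simp only [mono_succ, Matrix.mul_apply]
      have h1 := hL (σ 0) (τ 0)
      have h2 := ih (Fin.tail σ) (Fin.tail τ)
      fun_prop
  simp only [TM, Matrix.of_apply, Matrix.trace, Matrix.diag]
  have := key N σ τ
  fun_prop

lemma Lz_differentiable (ζ : ℝ) (s s' i j : Bool) : Differentiable ℂ fun t => Lz ζ t s s' i j := by
  unfold Lz
  cases s <;> cases s' <;> cases i <;> cases j <;> simp [Lw] <;> fun_prop

lemma Kz_differentiable (ζ : ℝ) (s s' : Bool) (i j : Fin 3) :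
    Differentiable ℂ fun t => Kz ζ t s s' i j := by
  unfold Kz
  cases s <;> cases s' <;> fin_cases i <;> fin_cases j <;> simp [Kf] <;> fun_prop

lemma Tz_differentiable (N : ℕ) (ζ : ℝ) (σ τ : J N) : Differentiable ℂ fun t => Tz N ζ t σ τ :=
  TM_differentiable _ (Lz_differentiable ζ) N σ τ

lemma eq_zero_of_line (f : ℂ → ℂ) (hf : Differentiable ℂ f) (x : ℝ)
    (h : ∀ s : ℝ, f (x + s * Complex.I) = 0) (t : ℂ) : f t = 0 := by
  have ha : AnalyticOnNhd ℂ f Set.univ := fun z _ => hf.analyticAt z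
  refine ha.eqOn_zero_of_preconnected_of_frequently_eq_zero isPreconnected_univ
    (Set.mem_univ (x : ℂ)) ?_ (Set.mem_univ t)
  have hcont : Tendsto (fun s : ℝ => (x : ℂ) + s * Complex.I) (nhdsWithin 0 {0}ᶜ)
      (nhdsWithin (x : ℂ) {(x : ℂ)}ᶜ) := by
    apply tendsto_nhdsWithin_of_tendsto_nhds_of_eventually_within
    · have : Continuous (fun s : ℝ => (x : ℂ) + s * Complex.I) := by fun_prop
      have h2 := this.tendsto 0
      simp at h2
      exact h2.mono_left nhdsWithin_le_nhds
    · filter_upwards [self_mem_nhdsWithin] with s hs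
      simpa using hs
  exact hcont.frequently (Frequently.of_forall h)

/-- joint eigenvector -/
structure JEig (N : ℕ) (ζ : ℝ) (ψ : J N → ℂ) (Λ : ℂ → ℂ) : Prop where
  unit : star ψ ⬝ᵥ ψ = 1
  eig : ∀ t, Tz N ζ t *ᵥ ψ = Λ t • ψ

lemma exists_joint (N : ℕ) (ζ : ℝ) (hζ : 0 < ζ) :
    ∃ (U : Matrix (J N) (J N) ℂ) (Λ : J N → ℂ → ℂ), Uᴴ * U = 1 ∧
      (∀ t, Tz N ζ t * U = U * diagonal fun j => Λ j t) := by
  obtain ⟨U, hU, d, hd⟩ := joint_diag (fun s : ℝ => Tz N ζ ((ζ / 2 : ℝ) + s * Complex.I)) (by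
    intro s
    rw [Tz_conj]; congr 1
    simp only [map_add, map_mul, Complex.conj_ofReal, Complex.conj_I]
    push_cast; ring) (fun s s' => Tz_comm_line N ζ hζ _ _ (by simp))
  have hU' : U * Uᴴ = 1 := mul_eq_one_comm.mp hU
  refine ⟨U, fun j t => (Uᴴ * Tz N ζ t * U) j j, hU, fun t => ?_⟩
  have hoff : ∀ i j, i ≠ j → (Uᴴ * Tz N ζ t * U) i j = 0 := by
    intro i j hij
    refine eq_zero_of_line (fun t => (Uᴴ * Tz N ζ t * U) i j) ?_ (ζ / 2) ?_ t
    · simp only [Matrix.mul_apply]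
      have := Tz_differentiable N ζ
      fun_prop
    · intro s
      have h1 : Tz N ζ ((ζ / 2 : ℝ) + s * Complex.I) * U = U * diagonal (d s) := hd s
      change (Uᴴ * Tz N ζ ((ζ / 2 : ℝ) + s * Complex.I) * U) i j = 0
      rw [Matrix.mul_assoc, h1, ← Matrix.mul_assoc, hU, Matrix.one_mul, Matrix.diagonal_apply_ne _ hij]
  have hdiag : Uᴴ * Tz N ζ t * U = diagonal fun j => (Uᴴ * Tz N ζ t * U) j j := by
    ext i j
    by_cases hij : i = j
    · subst hij; simp
    · rw [hoff i j hij, Matrix.diagonal_apply_ne _ hij]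
  rw [← hdiag, ← Matrix.mul_assoc, ← Matrix.mul_assoc, hU', Matrix.one_mul]

lemma JEig_of_diag {N : ℕ} {ζ : ℝ} {U : Matrix (J N) (J N) ℂ} {Λ : J N → ℂ → ℂ} (hU : Uᴴ * U = 1)
    (h : ∀ t, Tz N ζ t * U = U * diagonal fun j => Λ j t) (j : J N) :
    JEig N ζ (fun σ => U σ j) (Λ j) := by
  constructor
  · have := congrFun (congrFun hU j) j
    simpa [Matrix.mul_apply, dotProduct] using this
  · intro t
    ext σ
    have := congrFun (congrFun (h t) σ) j
    rw [Matrix.mul_diagonal] at this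
    simpa [Matrix.mul_apply, Matrix.mulVec, dotProduct, mul_comm] using this

lemma trace_pow_of_diag {n : Type} [Fintype n] [DecidableEq n] {T U : Matrix n n ℂ} {d : n → ℂ}
    (hU : Uᴴ * U = 1) (h : T * U = U * diagonal d) (M : ℕ) : (T ^ M).trace = ∑ j, d j ^ M := by
  have hU' : U * Uᴴ = 1 := mul_eq_one_comm.mp hU
  have h1 : T ^ M * U = U * diagonal (fun j => d j ^ M) := by
    induction M with
    | zero => simp
    | succ m ih =>
      rw [pow_succ, Matrix.mul_assoc, h, ← Matrix.mul_assoc, ih, Matrix.mul_assoc,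
        Matrix.diagonal_mul_diagonal]
      simp [pow_succ]
  calc (T ^ M).trace = (T ^ M * (U * Uᴴ)).trace := by rw [hU', Matrix.mul_one]
    _ = (U * diagonal (fun j => d j ^ M) * Uᴴ).trace := by rw [← Matrix.mul_assoc, h1]
    _ = (diagonal (fun j => d j ^ M)).trace := by
      rw [Matrix.mul_assoc, Matrix.trace_mul_comm, Matrix.mul_assoc, hU, Matrix.mul_one]
    _ = _ := by simp [Matrix.trace]

/-- pigeonhole -/
lemma exists_overlap {N : ℕ} {U : Matrix (J N) (J N) ℂ} (hU : Uᴴ * U = 1) (v : J N → ℂ)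
    (hv : star v ⬝ᵥ v = 1) : ∃ j, (1 : ℝ) / 2 ^ N ≤ ‖(star fun σ => U σ j) ⬝ᵥ v‖ ^ 2 := by
  have hU' : U * Uᴴ = 1 := mul_eq_one_comm.mp hU
  have h1 : ∑ j, ‖(star fun σ => U σ j) ⬝ᵥ v‖ ^ 2 = 1 := by
    have h2 : star (Uᴴ *ᵥ v) ⬝ᵥ (Uᴴ *ᵥ v) = 1 := by
      rw [Matrix.star_mulVec, Matrix.conjTranspose_conjTranspose, ← Matrix.dotProduct_mulVec,
        Matrix.mulVec_mulVec, hU', Matrix.one_mulVec, hv]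
    have h3 : star (Uᴴ *ᵥ v) ⬝ᵥ (Uᴴ *ᵥ v)
        = ((∑ j, ‖(star fun σ => U σ j) ⬝ᵥ v‖ ^ 2 : ℝ) : ℂ) := by
      rw [dotProduct]
      push_cast
      refine Finset.sum_congr rfl fun j _ => ?_
      have : (Uᴴ *ᵥ v) j = (star fun σ => U σ j) ⬝ᵥ v := rfl
      rw [Pi.star_apply, this, ← Complex.conj_mul']
      rfl
    rw [h2] at h3
    exact_mod_cast h3.symm
  by_contra hcon
  push Not at hcon
  have : ∑ j, ‖(star fun σ => U σ j) ⬝ᵥ v‖ ^ 2 < ∑ j : J N, (1 : ℝ) / 2 ^ N :=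
    Finset.sum_lt_sum_of_nonempty Finset.univ_nonempty fun j _ => hcon j
  rw [h1] at this
  simp at this

/-- norm bound -/
lemma TM_bound {A : Type} [Fintype A] [DecidableEq A] (L : Bool → Bool → Matrix A A ℂ) (r : ℝ)
    (hr : 0 ≤ r)
    (hL : ∀ s s', ∑ t, L s t * (L s' t)ᴴ = if s = s' then ((r ^ 2 : ℝ) : ℂ) • 1 else 0) (N : ℕ)
    (ψ : J N → ℂ) (hψ : star ψ ⬝ᵥ ψ = 1) :
    ‖star ψ ⬝ᵥ (TM L N *ᵥ ψ)‖ ≤ Fintype.card A * r ^ N := by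
  have hψ' : ∑ σ, ‖ψ σ‖ ^ 2 = 1 := by
    have : star ψ ⬝ᵥ ψ = ((∑ σ, ‖ψ σ‖ ^ 2 : ℝ) : ℂ) := by
      rw [dotProduct]; push_cast
      refine Finset.sum_congr rfl fun j _ => ?_
      rw [← Complex.conj_mul']; rfl
    rw [hψ] at this
    exact_mod_cast this.symm
  set u : A → A → J N → ℂ := fun α β τ => ∑ σ, starRingEnd ℂ (ψ σ) * mono L σ τ α β with hu
  have hsum : star ψ ⬝ᵥ (TM L N *ᵥ ψ) = ∑ α, ∑ τ, u α α τ * ψ τ := by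
    simp only [dotProduct, Matrix.mulVec, TM, Matrix.of_apply, Matrix.trace, Matrix.diag, hu,
      Finset.sum_mul, Finset.mul_sum, Pi.star_apply]
    rw [Finset.sum_comm]
    rw [Finset.sum_comm]
    have : ∀ σ : J N, ∑ τ : J N, ∑ α, star (ψ σ) * (mono L σ τ α α * ψ τ)
      = ∑ α, ∑ τ : J N, starRingEnd ℂ (ψ σ) * mono L σ τ α α * ψ τ := by
      intro σ; rw [Finset.sum_comm]
      simp only [mul_assoc]; rfl
    rw [Finset.sum_congr rfl fun σ _ => this σ, Finset.sum_comm]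
    refine Finset.sum_congr rfl fun α _ => Finset.sum_comm
  have hnorm : ∀ α, ∑ τ, ∑ β, ‖u α β τ‖ ^ 2 = (r ^ N) ^ 2 := by
    intro α
    have h1 : ((∑ τ, ∑ β, ‖u α β τ‖ ^ 2 : ℝ) : ℂ)
        = ∑ σ, ∑ σ', starRingEnd ℂ (ψ σ) * ψ σ' * (∑ τ, mono L σ τ * (mono L σ' τ)ᴴ) α α := by
      push_cast
      have e : ∀ τ β, (‖u α β τ‖ : ℂ) ^ 2 = ∑ σ, ∑ σ', starRingEnd ℂ (ψ σ) * ψ σ' *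
          (mono L σ τ α β * starRingEnd ℂ (mono L σ' τ α β)) := by
        intro τ β
        rw [← Complex.mul_conj', hu]
        simp only [map_sum, map_mul, Complex.conj_conj, Finset.sum_mul, Finset.mul_sum]
        rw [Finset.sum_comm]
        refine Finset.sum_congr rfl fun σ _ => Finset.sum_congr rfl fun σ' _ => ?_
        ring
      simp only [e]
      simp only [Matrix.sum_apply, Matrix.mul_apply, Matrix.conjTranspose_apply, Finset.mul_sum]
      rw [Finset.sum_congr rfl fun τ _ => Finset.sum_comm]
      rw [Finset.sum_comm]
      refine Finset.sum_congr rfl fun σ _ => ?_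
      rw [Finset.sum_congr rfl fun τ _ => Finset.sum_comm]
      rw [Finset.sum_comm]
      rfl
    have h2 : ∀ σ σ', starRingEnd ℂ (ψ σ) * ψ σ' * (∑ τ, mono L σ τ * (mono L σ' τ)ᴴ) α α
        = if σ = σ' then ((‖ψ σ‖ ^ 2 * (r ^ N) ^ 2 : ℝ) : ℂ) else 0 := by
      intro σ σ'
      rw [mono_unitary L (r ^ 2) hL]
      by_cases h : σ = σ'
      · subst h
        simp [← pow_mul, mul_comm]
        left
        rw [Complex.mul_conj']
      · simp [h]
    simp only [h2] at h1
    simp only [Finset.sum_ite_eq, Finset.mem_univ, if_true] at h1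
    rw [← Complex.ofReal_sum, ← Finset.sum_mul, hψ', one_mul] at h1
    exact_mod_cast h1
  rw [hsum]
  refine (norm_sum_le _ _).trans ?_
  have : ∀ α ∈ Finset.univ, ‖∑ τ, u α α τ * ψ τ‖ ≤ r ^ N := by
    intro α _
    have h1 : ‖∑ τ, u α α τ * ψ τ‖ ≤ ∑ τ, ‖u α α τ‖ * ‖ψ τ‖ :=
      (norm_sum_le _ _).trans (by simp)
    have h2 := Finset.sum_mul_sq_le_sq_mul_sq Finset.univ (fun τ => ‖u α α τ‖) (fun τ => ‖ψ τ‖)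
    rw [hψ', mul_one] at h2
    have h3 : ∑ τ, ‖u α α τ‖ ^ 2 ≤ (r ^ N) ^ 2 := by
      rw [← hnorm α]
      refine Finset.sum_le_sum fun τ _ => ?_
      exact Finset.single_le_sum (f := fun β => ‖u α β τ‖ ^ 2) (fun β _ => by positivity) (Finset.mem_univ α)
    exact h1.trans (abs_le_of_sq_le_sq' (h2.trans h3) (by positivity)).2
  refine (Finset.sum_le_sum this).trans ?_
  simp

end SixVertexFE

namespace SixVertexFE
open Matrix
open scoped Kronecker

lemma Lw_unitary (a b : ℂ) (c : ℝ) (h1 : starRingEnd ℂ b = -b)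
    (h2 : ‖a‖ ^ 2 = ‖b‖ ^ 2 + c ^ 2) (s s' : Bool) :
    ∑ t, Lw a b c s t * (Lw a b c s' t)ᴴ
      = if s = s' then ((‖a‖ ^ 2 : ℝ) : ℂ) • 1 else 0 := by
  have e1 : a * starRingEnd ℂ a = ((‖a‖ ^ 2 : ℝ) : ℂ) := by
    rw [Complex.mul_conj, Complex.normSq_eq_norm_sq]
  have e2 : b * starRingEnd ℂ b = ((‖b‖ ^ 2 : ℝ) : ℂ) := by
    rw [Complex.mul_conj, Complex.normSq_eq_norm_sq]
  have e3 : ((‖b‖ ^ 2 : ℝ) : ℂ) + (c : ℂ) ^ 2 = ((‖a‖ ^ 2 : ℝ) : ℂ) := by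
    rw [h2]; push_cast; rfl
  have hm : ∀ (M P : Matrix Bool Bool ℂ) i j, (M * Pᴴ) i j = M i true * starRingEnd ℂ (P j true)
      + M i false * starRingEnd ℂ (P j false) := by
    intro M P i j
    simp [Matrix.mul_apply]
  rw [Fintype.sum_bool]
  ext i j
  rw [Matrix.add_apply, hm, hm]
  push_cast at e1 e2 e3
  cases s <;> cases s' <;> cases i <;> cases j <;> simp [Lw] <;>
    first
    | linear_combination e1
    | linear_combination e2 + e3
    | (rw [h1]; ring1)

lemma Lz_unitary (ζ : ℝ) (t : ℂ) (ht : t.re = 0) (s s' : Bool) :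
    ∑ r, Lz ζ t s r * (Lz ζ t s' r)ᴴ
      = if s = s' then ((‖Complex.sinh (ζ - t)‖ ^ 2 : ℝ) : ℂ) • 1 else 0 := by
  unfold Lz
  rw [← Complex.ofReal_sinh]
  apply Lw_unitary
  · rw [← Complex.sinh_conj, ← Complex.sinh_neg]
    congr 1
    apply Complex.ext <;> simp [ht]
  · have e1 : (ζ : ℂ) - t = (ζ : ℂ) + ((-t.im : ℝ) : ℂ) * Complex.I := by
      apply Complex.ext <;> simp [ht]
    have e2 : t = ((0 : ℝ) : ℂ) + (t.im : ℂ) * Complex.I := by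
      apply Complex.ext <;> simp [ht]
    rw [e1, normSq_sinh_aux]
    conv_rhs => rw [e2, normSq_sinh_aux]
    simp; ring

section
variable {N : ℕ} {ζ : ℝ} {ψ : J N → ℂ} {Λ : ℂ → ℂ}

lemma JEig.eq (h : JEig N ζ ψ Λ) (t : ℂ) : Λ t = star ψ ⬝ᵥ (Tz N ζ t *ᵥ ψ) := by
  rw [h.eig, dotProduct_smul, h.unit]; simp

lemma quad_differentiable (ψ : J N → ℂ) (T : ℂ → Matrix (J N) (J N) ℂ)
    (hT : ∀ σ τ, Differentiable ℂ fun t => T t σ τ) :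
    Differentiable ℂ fun t => star ψ ⬝ᵥ (T t *ᵥ ψ) := by
  simp only [dotProduct, Matrix.mulVec]
  fun_prop

lemma JEig.diff (h : JEig N ζ ψ Λ) : Differentiable ℂ Λ := by
  have : Λ = fun t => star ψ ⬝ᵥ (Tz N ζ t *ᵥ ψ) := funext h.eq
  rw [this]
  exact quad_differentiable ψ _ (Tz_differentiable N ζ)

lemma JEig.reflect (h : JEig N ζ ψ Λ) (t : ℂ) :
    Λ (ζ - starRingEnd ℂ t) = starRingEnd ℂ (Λ t) := by
  rw [h.eq, ← Tz_conj, h.eq t]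
  change _ = star _
  rw [← Matrix.star_dotProduct, Matrix.star_mulVec, ← Matrix.dotProduct_mulVec]

lemma JEig.left (h : JEig N ζ ψ Λ) (t : ℂ) : star ψ ᵥ* Tz N ζ t = Λ t • star ψ := by
  have h1 := h.eig (ζ - starRingEnd ℂ t)
  rw [h.reflect, ← Tz_conj] at h1
  have h2 := congrArg star h1
  rw [Matrix.star_mulVec, Matrix.conjTranspose_conjTranspose] at h2
  rw [h2]
  ext σ
  simp

lemma JEig.period (h : JEig N ζ ψ Λ) (hN : Even N) (t : ℂ) : Λ (t + π * Complex.I) = Λ t := by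
  rw [h.eq, h.eq, Tz_period N hN]

lemma JEig.bound0 (h : JEig N ζ ψ Λ) (t : ℂ) (ht : t.re = 0) :
    ‖Λ t‖ ≤ 2 * ‖Complex.sinh (ζ - t)‖ ^ N := by
  rw [h.eq]
  have := TM_bound (Lz ζ t) ‖Complex.sinh (ζ - t)‖ (norm_nonneg _) (Lz_unitary ζ t ht) N ψ h.unit
  simpa [Tz] using this

def Xq (ζ : ℝ) (ψ : J N → ℂ) (t : ℂ) : ℂ := star ψ ⬝ᵥ (TM (Kz ζ t) N *ᵥ ψ)

lemma Xq_diff : Differentiable ℂ (Xq ζ ψ) :=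
  quad_differentiable ψ _ (TM_differentiable _ (Kz_differentiable ζ) N)

lemma JEig.boundX (h : JEig N ζ ψ Λ) (t : ℂ) (ht : t.re = -ζ / 2) :
    ‖Xq ζ ψ t‖ ≤ 3 * ‖Complex.sinh (ζ - t)‖ ^ N := by
  have := TM_bound (Kz ζ t) ‖Complex.sinh (ζ - t)‖ (norm_nonneg _) (Kz_unitary ζ t ht) N ψ h.unit
  simpa [Xq] using this

lemma JEig.fusion (h : JEig N ζ ψ Λ) (t : ℂ) :
    Λ t * Λ (ζ + t) = (Complex.sinh (ζ - t) * Complex.sinh (ζ + t)) ^ N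
      + Complex.sinh t ^ N * Xq ζ ψ t := by
  have h1 := congrArg (fun A => star ψ ⬝ᵥ (A *ᵥ ψ)) (SixVertexFE.fusion N ζ t)
  simp only [← Matrix.mulVec_mulVec, h.eig, Matrix.mulVec_smul, dotProduct_smul, h.unit,
    Matrix.add_mulVec, Matrix.smul_mulVec, Matrix.one_mulVec, dotProduct_add] at h1
  simp only [smul_eq_mul, mul_one] at h1
  rw [mul_comm, h1]; rfl

end

end SixVertexFE

namespace SixVertexFE

def fcoef (ζ : ℝ) (n : ℕ) : ℝ :=
  Real.exp (-2 * ((n : ℝ) + 1) * ζ) / (((n : ℝ) + 1) * Real.cosh (((n : ℝ) + 1) * ζ))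

def fterm (ζ : ℝ) (n : ℕ) (t : ℂ) : ℂ :=
  (fcoef ζ n : ℂ) * Complex.cosh (((n : ℝ) + 1 : ℝ) * (ζ - 2 * t))

def Fz (ζ : ℝ) (t : ℂ) : ℂ := ((ζ - Real.log 2 : ℝ) : ℂ) - ∑' n, fterm ζ n t

lemma norm_cosh_le (z : ℂ) : ‖Complex.cosh z‖ ≤ Real.cosh z.re := by
  rw [Complex.cosh, Real.cosh_eq]
  rw [norm_div]
  have : ‖(2 : ℂ)‖ = 2 := by simp
  rw [this]
  gcongr
  refine (norm_add_le _ _).trans ?_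
  rw [Complex.norm_exp, Complex.norm_exp]; simp

lemma fcoef_nonneg (ζ : ℝ) (n : ℕ) : 0 ≤ fcoef ζ n := by
  unfold fcoef
  have := Real.cosh_pos (((n : ℝ) + 1) * ζ)
  positivity

lemma cosh_mono {x y : ℝ} (h : |x| ≤ y) : Real.cosh x ≤ Real.cosh y := by
  rw [Real.cosh_le_cosh]; exact h.trans (le_abs_self y)

/-- geometric bound in the closed strip -/
lemma fterm_le (ζ : ℝ) (n : ℕ) (t : ℂ) (h0 : 0 ≤ t.re) (h1 : t.re ≤ ζ) :
    ‖fterm ζ n t‖ ≤ Real.exp (-2 * ζ) ^ (n + 1) / ((n : ℝ) + 1) := by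
  have hn : (0 : ℝ) < (n : ℝ) + 1 := by positivity
  have hc := Real.cosh_pos (((n : ℝ) + 1) * ζ)
  unfold fterm
  rw [norm_mul, Complex.norm_real, Real.norm_of_nonneg (fcoef_nonneg ζ n)]
  have h2 : ‖Complex.cosh (((n : ℝ) + 1 : ℝ) * (ζ - 2 * t))‖ ≤ Real.cosh (((n : ℝ) + 1) * ζ) := by
    refine (norm_cosh_le _).trans (cosh_mono ?_)
    have : ((((n : ℝ) + 1 : ℝ) : ℂ) * (ζ - 2 * t)).re = ((n : ℝ) + 1) * (ζ - 2 * t.re) := by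
      rw [Complex.re_ofReal_mul]; simp
    rw [this, abs_mul, abs_of_pos hn]
    gcongr
    rw [abs_le]; constructor <;> linarith
  calc fcoef ζ n * _ ≤ fcoef ζ n * Real.cosh (((n : ℝ) + 1) * ζ) :=
        mul_le_mul_of_nonneg_left h2 (fcoef_nonneg ζ n)
    _ = _ := by
      unfold fcoef
      rw [← Real.exp_nat_mul]
      rw [show (((n + 1 : ℕ) : ℝ) * (-2 * ζ)) = -2 * ((n : ℝ) + 1) * ζ by push_cast; ring]
      field_simp

lemma fterm_le_open (ζ : ℝ) (n : ℕ) (t : ℂ) (h0 : -ζ / 2 < t.re) (h1 : t.re < 3 * ζ / 2) :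
    ‖fterm ζ n t‖ ≤ 2 * Real.exp (-ζ) ^ n := by
  have hζ : 0 < ζ := by linarith
  have hn : (1 : ℝ) ≤ (n : ℝ) + 1 := by linarith [(Nat.cast_nonneg n : (0:ℝ) ≤ n)]
  have hc := Real.cosh_pos (((n : ℝ) + 1) * ζ)
  unfold fterm
  rw [norm_mul, Complex.norm_real, Real.norm_of_nonneg (fcoef_nonneg ζ n)]
  have h2 : ‖Complex.cosh (((n : ℝ) + 1 : ℝ) * (ζ - 2 * t))‖ ≤ Real.exp (2 * ((n : ℝ) + 1) * ζ) := by
    refine (norm_cosh_le _).trans ((cosh_mono (y := 2 * ((n : ℝ) + 1) * ζ) ?_).trans ?_)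
    · have : ((((n : ℝ) + 1 : ℝ) : ℂ) * (ζ - 2 * t)).re = ((n : ℝ) + 1) * (ζ - 2 * t.re) := by
        rw [Complex.re_ofReal_mul]; simp
      rw [this, abs_mul, abs_of_pos (by linarith), show 2 * ((n : ℝ) + 1) * ζ = ((n : ℝ) + 1) * (2 * ζ) by ring]
      gcongr
      rw [abs_le]; constructor <;> linarith
    · rw [Real.cosh_eq]
      have : Real.exp (-(2 * ((n : ℝ) + 1) * ζ)) ≤ Real.exp (2 * ((n : ℝ) + 1) * ζ) := by
        apply Real.exp_le_exp.mpr
        have : 0 ≤ 2 * ((n : ℝ) + 1) * ζ := by positivity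
        linarith
      linarith
  have h3 : fcoef ζ n * Real.exp (2 * ((n : ℝ) + 1) * ζ) = 1 / (((n : ℝ) + 1) * Real.cosh (((n : ℝ) + 1) * ζ)) := by
    unfold fcoef
    rw [div_mul_eq_mul_div, ← Real.exp_add]
    ring_nf; simp
  have h4 : Real.exp (((n : ℝ) ) * ζ) / 2 ≤ ((n : ℝ) + 1) * Real.cosh (((n : ℝ) + 1) * ζ) := by
    have h5 : Real.exp ((n : ℝ) * ζ) / 2 ≤ Real.cosh (((n : ℝ) + 1) * ζ) := by
      rw [Real.cosh_eq]
      have := Real.exp_pos (-(((n : ℝ) + 1) * ζ))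
      have h6 : Real.exp ((n : ℝ) * ζ) ≤ Real.exp (((n : ℝ) + 1) * ζ) := by
        apply Real.exp_le_exp.mpr; nlinarith
      linarith
    nlinarith
  calc fcoef ζ n * _ ≤ fcoef ζ n * Real.exp (2 * ((n : ℝ) + 1) * ζ) :=
        mul_le_mul_of_nonneg_left h2 (fcoef_nonneg ζ n)
    _ = 1 / (((n : ℝ) + 1) * Real.cosh (((n : ℝ) + 1) * ζ)) := h3
    _ ≤ 1 / (Real.exp ((n : ℝ) * ζ) / 2) := one_div_le_one_div_of_le (by positivity) h4
    _ = 2 * Real.exp (-ζ) ^ n := by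
      rw [← Real.exp_nat_mul, mul_neg, Real.exp_neg]; field_simp

lemma summable_geo (ζ : ℝ) (hζ : 0 < ζ) : Summable fun n : ℕ => 2 * Real.exp (-ζ) ^ n :=
  (summable_geometric_of_lt_one (Real.exp_pos _).le (by simpa using hζ)).mul_left 2

lemma summable_fterm (ζ : ℝ) (t : ℂ) (h0 : -ζ / 2 < t.re) (h1 : t.re < 3 * ζ / 2) :
    Summable fun n => fterm ζ n t :=
  Summable.of_norm_bounded (summable_geo ζ (by linarith)) fun n => fterm_le_open ζ n t h0 h1

lemma Fz_diffOn (ζ : ℝ) (hζ : 0 < ζ) :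
    DifferentiableOn ℂ (Fz ζ) {t | -ζ / 2 < t.re ∧ t.re < 3 * ζ / 2} := by
  unfold Fz
  apply DifferentiableOn.const_sub
  have hopen : IsOpen {t : ℂ | -ζ / 2 < t.re ∧ t.re < 3 * ζ / 2} :=
    (isOpen_lt continuous_const Complex.continuous_re).inter
      (isOpen_lt Complex.continuous_re continuous_const)
  refine Complex.differentiableOn_tsum_of_summable_norm (summable_geo ζ hζ) (fun n => ?_) hopen
    (fun n t ht => fterm_le_open ζ n t ht.1 ht.2)
  unfold fterm
  fun_prop

lemma Fz_reflect (ζ : ℝ) (t : ℂ) : Fz ζ (ζ - starRingEnd ℂ t) = starRingEnd ℂ (Fz ζ t) := by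
  unfold Fz
  rw [map_sub, Complex.conj_ofReal, Complex.conj_tsum]
  congr 2
  ext n
  unfold fterm
  rw [map_mul, Complex.conj_ofReal, ← Complex.cosh_conj, map_mul, map_sub, map_mul,
    Complex.conj_ofReal, Complex.conj_ofReal, ← Complex.cosh_neg]
  congr 2
  have h2 : starRingEnd ℂ 2 = 2 := Complex.conj_ofNat 2
  rw [h2]; ring

/-- boundary value -/
lemma Fz_boundary (ζ : ℝ) (hζ : 0 < ζ) (t : ℂ) (ht : t.re = 0) :
    Real.exp (Fz ζ t).re = ‖Complex.sinh (ζ - t)‖ := by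
  set w : ℂ := Complex.exp (-2 * (ζ - t)) with hw
  have hw1 : ‖w‖ < 1 := by
    rw [hw, Complex.norm_exp]
    simp [ht, hζ]
  have hs := Complex.hasSum_taylorSeries_neg_log hw1
  have hs1 : HasSum (fun n : ℕ => w ^ (n + 1) / ((n : ℂ) + 1)) (-Complex.log (1 - w)) := by
    rw [← hasSum_nat_add_iff' 1] at hs
    simpa using hs
  have hs2 := Complex.hasSum_re hs1
  have hf := Complex.hasSum_re (summable_fterm ζ t (by linarith) (by linarith)).hasSum
  have heq : ∀ n, (fterm ζ n t).re = (w ^ (n + 1) / ((n : ℂ) + 1)).re := by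
    intro n
    have hn : (0 : ℝ) < (n : ℝ) + 1 := by positivity
    have hc := Real.cosh_pos (((n : ℝ) + 1) * ζ)
    have ht2 : t = t.im * Complex.I := by apply Complex.ext <;> simp [ht]
    unfold fterm
    rw [Complex.re_ofReal_mul]
    have e1 : ((((n : ℝ) + 1 : ℝ) : ℂ) * (ζ - 2 * t)) =
        ((((n : ℝ) + 1) * ζ : ℝ) : ℂ) + ((-2 * ((n : ℝ) + 1) * t.im : ℝ) : ℂ) * Complex.I := by
      conv_lhs => rw [ht2]
      push_cast; ring
    have e2 : (Complex.cosh ((((n : ℝ) + 1 : ℝ) : ℂ) * (ζ - 2 * t))).re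
        = Real.cosh (((n : ℝ) + 1) * ζ) * Real.cos (2 * ((n : ℝ) + 1) * t.im) := by
      rw [e1, Complex.cosh_add, Complex.cosh_mul_I, Complex.sinh_mul_I, ← Complex.ofReal_cosh,
        ← Complex.ofReal_sinh, ← Complex.ofReal_cos, ← Complex.ofReal_sin, ← mul_assoc,
        ← Complex.ofReal_mul, ← Complex.ofReal_mul, Complex.add_re, Complex.re_ofReal_mul,
        Complex.I_re, mul_zero, add_zero, Complex.ofReal_re,
        show -2 * ((n : ℝ) + 1) * t.im = -(2 * ((n : ℝ) + 1) * t.im) by ring, Real.cos_neg]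
    rw [e2]
    have e3 : w ^ (n + 1) / ((n : ℂ) + 1)
        = ((Real.exp (-2 * ((n : ℝ) + 1) * ζ) / ((n : ℝ) + 1) : ℝ) : ℂ)
          * Complex.exp ((2 * ((n : ℝ) + 1) * t.im : ℝ) * Complex.I) := by
      rw [hw, ← Complex.exp_nat_mul]
      push_cast
      rw [div_mul_eq_mul_div, ← Complex.exp_add]
      congr 2
      conv_lhs => rw [ht2]
      ring
    rw [e3, Complex.re_ofReal_mul, Complex.exp_ofReal_mul_I_re]
    unfold fcoef
    field_simp
  have hfs : (∑' n, fterm ζ n t).re = (-Complex.log (1 - w)).re := by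
    apply hf.unique
    simp only [heq]
    exact hs2
  have hne : 1 - w ≠ 0 := by
    intro h
    rw [sub_eq_zero] at h
    rw [← h] at hw1
    simp at hw1
  unfold Fz
  rw [Complex.sub_re, hfs, Complex.ofReal_re, Complex.neg_re, Complex.log_re, sub_neg_eq_add,
    Real.exp_add, Real.exp_log (norm_pos_iff.mpr hne), Real.exp_sub, Real.exp_log two_pos]
  have h5 : Complex.sinh (ζ - t) = Complex.exp (ζ - t) / 2 * (1 - w) := by
    have h6 : Complex.exp (ζ - t) * w = Complex.exp (-(ζ - t)) := by
      rw [hw, ← Complex.exp_add]; ring_nf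
    rw [Complex.sinh]; linear_combination (1/2) * h6
  rw [h5, norm_mul, norm_div, Complex.norm_exp]
  simp [ht]

lemma hasSum_log_real (x : ℝ) (h0 : 0 ≤ x) (hx : x < 1) :
    HasSum (fun n : ℕ => x ^ (n + 1) / ((n : ℝ) + 1)) (-Real.log (1 - x)) :=
  Real.hasSum_pow_div_log_of_abs_lt_one (by rw [abs_of_nonneg h0]; exact hx)

lemma log_sinh (x : ℝ) (hx : 0 < x) :
    Real.log (Real.sinh x) = x - Real.log 2 + Real.log (1 - Real.exp (-2 * x)) := by
  have h1 : Real.exp (-2 * x) < 1 := by rw [Real.exp_lt_one_iff]; linarith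
  have : Real.sinh x = Real.exp x / 2 * (1 - Real.exp (-2 * x)) := by
    have h6 : Real.exp x * Real.exp (-2 * x) = Real.exp (-x) := by
      rw [← Real.exp_add]; ring_nf
    rw [Real.sinh_eq]; linear_combination (1/2) * h6
  rw [this, Real.log_mul (by positivity) (by linarith), Real.log_div (by positivity) (by positivity),
    Real.log_exp]

lemma tsum_fterm_norm_le (ζ : ℝ) (hζ : 0 < ζ) (t : ℂ) (h0 : 0 ≤ t.re) (h1 : t.re ≤ ζ) :
    ‖∑' n, fterm ζ n t‖ ≤ -Real.log (1 - Real.exp (-2 * ζ)) := by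
  have h2 := hasSum_log_real (Real.exp (-2 * ζ)) (Real.exp_pos _).le
    (by rw [Real.exp_lt_one_iff]; linarith)
  exact tsum_of_norm_bounded h2 fun n => fterm_le ζ n t h0 h1

lemma Fz_lower (ζ : ℝ) (hζ : 0 < ζ) (t : ℂ) (h0 : 0 ≤ t.re) (h1 : t.re ≤ ζ) :
    Real.sinh ζ ≤ Real.exp (Fz ζ t).re := by
  rw [← Real.log_le_iff_le_exp (Real.sinh_pos_iff.mpr hζ), log_sinh ζ hζ]
  unfold Fz
  have := tsum_fterm_norm_le ζ hζ t h0 h1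
  have h3 := Complex.abs_re_le_norm (∑' n, fterm ζ n t)
  have h4 := le_abs_self (∑' n, fterm ζ n t).re
  simp only [Complex.sub_re, Complex.ofReal_re]
  linarith

lemma Fz_upper (ζ : ℝ) (hζ : 0 < ζ) : ∃ B : ℝ, ∀ t : ℂ, 0 ≤ t.re → t.re ≤ ζ →
    Real.exp (Fz ζ t).re ≤ B := by
  refine ⟨Real.exp (ζ - Real.log 2 - Real.log (1 - Real.exp (-2 * ζ))), fun t h0 h1 => ?_⟩
  apply Real.exp_le_exp.mpr
  unfold Fz
  have := tsum_fterm_norm_le ζ hζ t h0 h1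
  have h3 := Complex.abs_re_le_norm (∑' n, fterm ζ n t)
  have h4 := neg_abs_le (∑' n, fterm ζ n t).re
  simp only [Complex.sub_re, Complex.ofReal_re]
  linarith

lemma Fz_target (ζ : ℝ) (hζ : 0 < ζ) (t : ℝ) (h0 : 0 < t) (h1 : t < ζ) :
    Real.log (Real.sinh (ζ - t)) + t +
      ∑' n : ℕ, (Real.exp (-((n : ℝ) + 1) * ζ) / ((n : ℝ) + 1)) *
          (Real.sinh (2 * ((n : ℝ) + 1) * t) / Real.cosh (((n : ℝ) + 1) * ζ))
      = (Fz ζ t).re := by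
  have hx : Real.exp (-2 * (ζ - t)) < 1 := by rw [Real.exp_lt_one_iff]; linarith
  have hs := hasSum_log_real (Real.exp (-2 * (ζ - t))) (Real.exp_pos _).le hx
  have hf := Complex.hasSum_re (summable_fterm ζ t (by simp; linarith) (by simp; linarith)).hasSum
  have hd := hs.sub hf
  have heq : ∀ n : ℕ, Real.exp (-2 * (ζ - t)) ^ (n + 1) / ((n : ℝ) + 1) - (fterm ζ n t).re
      = (Real.exp (-((n : ℝ) + 1) * ζ) / ((n : ℝ) + 1)) *
          (Real.sinh (2 * ((n : ℝ) + 1) * t) / Real.cosh (((n : ℝ) + 1) * ζ)) := by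
    intro n
    have hn : (0 : ℝ) < (n : ℝ) + 1 := by positivity
    have hc := Real.cosh_pos (((n : ℝ) + 1) * ζ)
    have e1 : fterm ζ n t = ((fcoef ζ n * Real.cosh (((n : ℝ) + 1) * (ζ - 2 * t)) : ℝ) : ℂ) := by
      unfold fterm; push_cast; rfl
    rw [e1, Complex.ofReal_re]
    unfold fcoef
    rw [← Real.exp_nat_mul]
    field_simp
    rw [Real.cosh_eq, Real.cosh_eq, Real.sinh_eq]
    push_cast
    simp only [mul_sub, mul_add, ← mul_div_assoc, sub_mul, add_mul, ← Real.exp_add]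
    ring_nf
  simp only [heq] at hd
  rw [hd.tsum_eq, log_sinh _ (by linarith)]
  unfold Fz
  simp only [Complex.sub_re, Complex.ofReal_re]
  ring

end SixVertexFE

namespace SixVertexFE

lemma closure_strip (a b : ℝ) : closure (Complex.re ⁻¹' Set.Ioo a b) ⊆ {t : ℂ | a ≤ t.re ∧ t.re ≤ b} := by
  apply closure_minimal
  · intro t ht
    exact ⟨ht.1.le, ht.2.le⟩
  · exact (isClosed_le continuous_const Complex.continuous_re).inter
      (isClosed_le Complex.continuous_re continuous_const)

lemma strip_le {f : ℂ → ℂ} {a b C D : ℝ} (hab : a < b)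
    (hd : DifferentiableOn ℂ f {t : ℂ | a ≤ t.re ∧ t.re ≤ b})
    (hB : ∀ z : ℂ, a ≤ z.re → z.re ≤ b → 1 ≤ |z.im| → ‖f z‖ ≤ D)
    (ha : ∀ z : ℂ, z.re = a → ‖f z‖ ≤ C) (hb : ∀ z : ℂ, z.re = b → ‖f z‖ ≤ C)
    (z : ℂ) (h1 : a ≤ z.re) (h2 : z.re ≤ b) : ‖f z‖ ≤ C := by
  refine PhragmenLindelof.vertical_strip (a := a) (b := b) ?_ ⟨0, ?_, 0, ?_⟩ ha hb h1 h2
  · exact (hd.mono (closure_strip a b)).diffContOnCl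
  · exact div_pos Real.pi_pos (by linarith)
  · refine Asymptotics.IsBigO.of_bound D ?_
    rw [eventually_inf_principal]
    have : ∀ᶠ x : ℝ in atTop, 1 ≤ x := eventually_ge_atTop 1
    filter_upwards [this.comap (abs ∘ Complex.im)] with z hz hz2
    simp only [zero_mul, Real.exp_zero, norm_one, mul_one]
    exact hB z hz2.1.le hz2.2.le hz

lemma period_int {f : ℂ → ℂ} (hp : ∀ t, f (t + π * Complex.I) = f t) (n : ℤ) (t : ℂ) :
    f (t + n * (π * Complex.I)) = f t := by
  have h : Function.Periodic f (π * Complex.I) := hp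
  exact h.int_mul n t

/-- move the imaginary part to `[-π/2, π/2]` -/
lemma period_reduce (t : ℂ) : ∃ n : ℤ, |(t + n * (π * Complex.I)).im| ≤ π / 2 ∧
    (t + n * (π * Complex.I)).re = t.re := by
  refine ⟨-round (t.im / π), ?_, by simp⟩
  have h := abs_sub_round (t.im / π)
  have h2 : (t + ((-round (t.im / π) : ℤ) : ℂ) * (π * Complex.I)).im = π * (t.im / π - round (t.im / π)) := by
    have : (((-round (t.im / π) : ℤ) : ℂ) * (π * Complex.I)).im = -(round (t.im / π) : ℝ) * π := by
      rw [← mul_assoc, ← Complex.ofReal_intCast, ← Complex.ofReal_mul]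
      simp
    rw [Complex.add_im, this]
    have := Real.pi_ne_zero
    field_simp
    ring
  rw [h2, abs_mul, abs_of_pos Real.pi_pos]
  have := Real.pi_pos
  nlinarith

lemma period_bound {f : ℂ → ℂ} {a b : ℝ} (hp : ∀ t, f (t + π * Complex.I) = f t)
    (hc : ContinuousOn f {t : ℂ | a ≤ t.re ∧ t.re ≤ b}) :
    ∃ D, ∀ t : ℂ, a ≤ t.re → t.re ≤ b → ‖f t‖ ≤ D := by
  have hK : IsCompact (Set.Icc a b ×ℂ Set.Icc (-(π / 2)) (π / 2)) :=
    isCompact_Icc.reProdIm isCompact_Icc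
  obtain ⟨D, hD⟩ := hK.exists_bound_of_continuousOn
    (hc.mono (fun t ht => ⟨(Complex.mem_reProdIm.mp ht).1.1, (Complex.mem_reProdIm.mp ht).1.2⟩))
  refine ⟨D, fun t h1 h2 => ?_⟩
  obtain ⟨n, hn1, hn2⟩ := period_reduce t
  rw [← period_int hp n t]
  apply hD
  rw [Complex.mem_reProdIm, hn2]
  exact ⟨⟨h1, h2⟩, abs_le.mp hn1⟩

lemma Fz_diffStrip (ζ : ℝ) (hζ : 0 < ζ) :
    DifferentiableOn ℂ (Fz ζ) {t | 0 ≤ t.re ∧ t.re ≤ ζ} :=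
  (Fz_diffOn ζ hζ).mono fun t ht => ⟨by linarith [ht.1], by linarith [ht.2]⟩

lemma norm_exp_nat_mul (N : ℕ) (z : ℂ) : ‖Complex.exp (N * z)‖ = Real.exp z.re ^ N := by
  rw [Complex.exp_nat_mul, norm_pow, Complex.norm_exp]

variable {N : ℕ} {ζ : ℝ} {ψ : J N → ℂ} {Λ : ℂ → ℂ}

lemma reflect_pt (ζ : ℝ) (t : ℂ) : ((ζ : ℂ) - starRingEnd ℂ (ζ - starRingEnd ℂ t)) = t := by
  simp

lemma JEig.norm_reflect (h : JEig N ζ ψ Λ) (t : ℂ) : ‖Λ (ζ - starRingEnd ℂ t)‖ = ‖Λ t‖ := by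
  rw [h.reflect]; simp

lemma Fz_re_reflect (ζ : ℝ) (t : ℂ) : (Fz ζ (ζ - starRingEnd ℂ t)).re = (Fz ζ t).re := by
  rw [Fz_reflect]; simp

lemma JEig.upper (h : JEig N ζ ψ Λ) (hζ : 0 < ζ) (hN : Even N) (t : ℂ) (h0 : 0 ≤ t.re) (h1 : t.re ≤ ζ) :
    ‖Λ t‖ ≤ 2 * Real.exp (Fz ζ t).re ^ N := by
  obtain ⟨D, hD⟩ := period_bound (a := 0) (b := ζ) (h.period hN) h.diff.continuous.continuousOn
  have hs := Real.sinh_pos_iff.mpr hζ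
  have key := strip_le (f := fun t => Λ t / Complex.exp (N * Fz ζ t)) (a := 0) (b := ζ) (C := 2)
    (D := D / Real.sinh ζ ^ N) hζ ?_ ?_ ?_ ?_ t h0 h1
  · rw [norm_div, norm_exp_nat_mul, div_le_iff₀ (by positivity)] at key
    exact key
  · apply DifferentiableOn.div h.diff.differentiableOn
    · exact ((Fz_diffStrip ζ hζ).const_mul _).cexp
    · intro x _; exact Complex.exp_ne_zero _
  · intro z z0 z1 _
    rw [norm_div, norm_exp_nat_mul]
    have := Fz_lower ζ hζ z z0 z1
    have h3 := hD z z0 z1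
    gcongr
    exact (norm_nonneg _).trans h3
  · intro z hz
    rw [norm_div, norm_exp_nat_mul, div_le_iff₀ (by positivity), Fz_boundary ζ hζ z hz]
    exact h.bound0 z hz
  · intro z hz
    rw [norm_div, norm_exp_nat_mul, div_le_iff₀ (by positivity), ← h.norm_reflect, ← Fz_re_reflect,
      Fz_boundary ζ hζ _ (by simp [hz])]
    exact h.bound0 _ (by simp [hz])

lemma JEig.lower (h : JEig N ζ ψ Λ) (hζ : 0 < ζ) (hN : Even N)
    (hne : ∀ t : ℂ, 0 ≤ t.re → t.re ≤ ζ → Λ t ≠ 0)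
    (hax : ∀ t : ℂ, t.re = 0 → 1 / 2 * ‖Complex.sinh (ζ - t)‖ ^ N ≤ ‖Λ t‖)
    (t : ℂ) (h0 : 0 ≤ t.re) (h1 : t.re ≤ ζ) :
    1 / 2 * Real.exp (Fz ζ t).re ^ N ≤ ‖Λ t‖ := by
  obtain ⟨D, hD⟩ := period_bound (f := fun t => (Λ t)⁻¹) (a := 0) (b := ζ)
    (fun t => by simp only [h.period hN])
    (h.diff.continuous.continuousOn.inv₀ fun t ht => hne t ht.1 ht.2)
  obtain ⟨B, hB⟩ := Fz_upper ζ hζ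
  have hs := Real.sinh_pos_iff.mpr hζ
  have key := strip_le (f := fun t => Complex.exp (N * Fz ζ t) * (Λ t)⁻¹) (a := 0) (b := ζ) (C := 2)
    (D := B ^ N * D) hζ ?_ ?_ ?_ ?_ t h0 h1
  · rw [norm_mul, norm_inv, norm_exp_nat_mul, ← div_eq_mul_inv,
      div_le_iff₀ (norm_pos_iff.mpr (hne t h0 h1))] at key
    linarith
  · apply DifferentiableOn.mul
    · exact ((Fz_diffStrip ζ hζ).const_mul _).cexp
    · exact h.diff.differentiableOn.inv fun t ht => hne t ht.1 ht.2
  · intro z z0 z1 _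
    rw [norm_mul, norm_exp_nat_mul]
    have := hB z z0 z1
    have h3 := hD z z0 z1
    have h4 := Real.exp_pos (Fz ζ z).re
    have : 0 ≤ B := by linarith
    gcongr
  · intro z hz
    rw [norm_mul, norm_inv, norm_exp_nat_mul, ← div_eq_mul_inv,
      div_le_iff₀ (norm_pos_iff.mpr (hne z (by linarith) (by linarith))), Fz_boundary ζ hζ z hz]
    linarith [hax z hz]
  · intro z hz
    rw [norm_mul, norm_inv, norm_exp_nat_mul, ← div_eq_mul_inv,
      div_le_iff₀ (norm_pos_iff.mpr (hne z (by linarith) (by linarith))), ← h.norm_reflect,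
      ← Fz_re_reflect, Fz_boundary ζ hζ _ (by simp [hz])]
    linarith [hax (ζ - starRingEnd ℂ z) (by simp [hz])]

end SixVertexFE

namespace SixVertexFE

lemma norm_sinh_sq (z : ℂ) : ‖Complex.sinh z‖ ^ 2 = Real.sinh z.re ^ 2 + Real.sin z.im ^ 2 := by
  rw [← normSq_sinh_aux, Complex.re_add_im]

lemma norm_sin_sq (w : ℂ) : ‖Complex.sin w‖ ^ 2 = Real.sinh w.im ^ 2 + Real.sin w.re ^ 2 := by
  have h : ‖Complex.sin w‖ = ‖Complex.sinh (w * Complex.I)‖ := by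
    rw [Complex.sinh_mul_I]; simp
  rw [h, norm_sinh_sq]; simp

lemma norm_cos_sq (w : ℂ) : ‖Complex.cos w‖ ^ 2 = Real.sinh w.im ^ 2 + Real.cos w.re ^ 2 := by
  rw [← Complex.sin_pi_div_two_sub, norm_sin_sq]
  have h1 : ((π : ℂ) / 2 - w).re = π / 2 - w.re := by
    rw [Complex.sub_re, show (π : ℂ) / 2 = ((π / 2 : ℝ) : ℂ) by push_cast; rfl, Complex.ofReal_re]
  have h2 : ((π : ℂ) / 2 - w).im = - w.im := by
    rw [Complex.sub_im, show (π : ℂ) / 2 = ((π / 2 : ℝ) : ℂ) by push_cast; rfl, Complex.ofReal_im]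
    ring
  rw [h1, h2, Real.sin_pi_div_two_sub]; simp

lemma tanh_mono {x y : ℝ} (h : x ≤ y) : Real.tanh x ≤ Real.tanh y := by
  rw [Real.tanh_eq_sinh_div_cosh, Real.tanh_eq_sinh_div_cosh,
    div_le_div_iff₀ (Real.cosh_pos _) (Real.cosh_pos _)]
  have h1 := Real.sinh_nonneg_iff.mpr (sub_nonneg.mpr h)
  rw [Real.sinh_sub] at h1
  linarith

def wz (ζ : ℝ) (t : ℂ) : ℂ := ((π / (2 * ζ) : ℝ) : ℂ) * t

lemma wz_re (ζ : ℝ) (t : ℂ) : (wz ζ t).re = π / (2 * ζ) * t.re := by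
  unfold wz; rw [Complex.re_ofReal_mul]
lemma wz_im (ζ : ℝ) (t : ℂ) : (wz ζ t).im = π / (2 * ζ) * t.im := by
  unfold wz; rw [Complex.im_ofReal_mul]

def Qz (ζ : ℝ) (t : ℂ) : ℂ := Complex.sin (wz ζ t)

lemma Qz_diff (ζ : ℝ) : Differentiable ℂ (Qz ζ) := by
  unfold Qz wz; fun_prop

lemma dslope_diff {f : ℂ → ℂ} (hf : Differentiable ℂ f) : Differentiable ℂ (dslope f 0) := by
  have := (Complex.differentiableOn_dslope (f := f) (s := Set.univ) (c := 0) univ_mem).mpr hf.differentiableOn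
  exact differentiableOn_univ.mp this

lemma Qz_ne {ζ : ℝ} (hζ : 0 < ζ) {t : ℂ} (h1 : -ζ / 2 ≤ t.re) (h2 : t.re ≤ ζ / 2) (ht : t ≠ 0) :
    Qz ζ t ≠ 0 := by
  intro h
  have h3 : ‖Qz ζ t‖ ^ 2 = 0 := by rw [h]; simp
  unfold Qz at h3
  rw [norm_sin_sq, wz_re, wz_im] at h3
  have hp : 0 < π / (2 * ζ) := by have := Real.pi_pos; positivity
  have h4 : Real.sinh (π / (2 * ζ) * t.im) = 0 := by
    nlinarith [sq_nonneg (Real.sinh (π / (2 * ζ) * t.im)), sq_nonneg (Real.sin (π / (2 * ζ) * t.re))]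
  have h5 : Real.sin (π / (2 * ζ) * t.re) = 0 := by
    nlinarith [sq_nonneg (Real.sinh (π / (2 * ζ) * t.im)), sq_nonneg (Real.sin (π / (2 * ζ) * t.re))]
  rw [Real.sinh_eq_zero] at h4
  have e : π / (2 * ζ) * (ζ / 2) = π / 4 := by field_simp; norm_num
  rw [Real.sin_eq_zero_iff_of_lt_of_lt] at h5
  · apply ht
    apply Complex.ext
    · simpa [hp.ne'] using h5
    · simpa [hp.ne'] using h4
  · have := mul_le_mul_of_nonneg_left h1 hp.le
    have := Real.pi_pos
    rw [show -ζ / 2 = -(ζ / 2) by ring, mul_neg, e] at *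
    linarith
  · have := mul_le_mul_of_nonneg_left h2 hp.le
    have := Real.pi_pos
    rw [e] at *
    linarith

lemma dQz_ne {ζ : ℝ} (hζ : 0 < ζ) {t : ℂ} (h1 : -ζ / 2 ≤ t.re) (h2 : t.re ≤ ζ / 2) :
    dslope (Qz ζ) 0 t ≠ 0 := by
  by_cases ht : t = 0
  · subst ht
    rw [dslope_same]
    have : HasDerivAt (Qz ζ) (Complex.cos (wz ζ 0) * ((π / (2 * ζ) : ℝ) : ℂ)) 0 := by
      unfold Qz wz
      have := ((hasDerivAt_id (0 : ℂ)).const_mul ((π / (2 * ζ) : ℝ) : ℂ)).csin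
      simpa using this
    rw [this.deriv]
    have hp : π / (2 * ζ) ≠ 0 := by have := Real.pi_pos; positivity
    unfold wz
    simp only [mul_zero, Complex.cos_zero, one_mul]
    exact_mod_cast hp
  · rw [dslope_of_ne _ ht, slope_def_field]
    have : Qz ζ 0 = 0 := by unfold Qz wz; simp
    rw [this]
    simp [ht, Qz_ne hζ h1 h2 ht]

def Sz (ζ : ℝ) (t : ℂ) : ℂ := dslope Complex.sinh 0 t / dslope (Qz ζ) 0 t

lemma Sz_eq {ζ : ℝ} {t : ℂ} (ht : t ≠ 0) : Sz ζ t = Complex.sinh t / Qz ζ t := by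
  unfold Sz
  rw [dslope_of_ne _ ht, dslope_of_ne _ ht, slope_def_field, slope_def_field]
  have : Qz ζ 0 = 0 := by unfold Qz wz; simp
  rw [this]
  simp only [Complex.sinh_zero, sub_zero]
  rw [div_div_div_cancel_right₀ ht]

variable {N : ℕ} {ζ : ℝ} {ψ : J N → ℂ} {Λ : ℂ → ℂ}

/-- the product of the two sinh factors -/
def Pz (ζ : ℝ) (t : ℂ) : ℂ := Complex.sinh (ζ - t) * Complex.sinh (ζ + t)

lemma Pz_ne (hζ : 0 < ζ) {t : ℂ} (h1 : -ζ / 2 ≤ t.re) (h2 : t.re ≤ ζ / 2) : Pz ζ t ≠ 0 := by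
  unfold Pz
  apply mul_ne_zero <;> apply sinh_ne_zero_of_re
  · simp; linarith
  · simp; linarith

lemma Pz_diff (ζ : ℝ) : Differentiable ℂ (Pz ζ) := by unfold Pz; fun_prop

def Wz (ζ : ℝ) (N : ℕ) (Λ : ℂ → ℂ) (t : ℂ) : ℂ := Λ t * Λ (ζ + t) / Pz ζ t ^ N - 1

lemma JEig.Wz_eq (h : JEig N ζ ψ Λ) (hζ : 0 < ζ) {t : ℂ} (h1 : -ζ / 2 ≤ t.re) (h2 : t.re ≤ ζ / 2) :
    Wz ζ N Λ t = Complex.sinh t ^ N * Xq ζ ψ t / Pz ζ t ^ N := by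
  have := pow_ne_zero N (Pz_ne hζ h1 h2)
  unfold Wz
  rw [h.fusion t]
  change (Pz ζ t ^ N + _) / _ - 1 = _
  field_simp
  ring

lemma sinh_add_pi_I (z : ℂ) : Complex.sinh (z + π * Complex.I) = - Complex.sinh z := by
  rw [Complex.sinh_add, Complex.sinh_mul_I, Complex.cosh_mul_I]; simp

lemma JEig.Wz_period (h : JEig N ζ ψ Λ) (hN : Even N) (t : ℂ) :
    Wz ζ N Λ (t + π * Complex.I) = Wz ζ N Λ t := by
  unfold Wz Pz
  have e1 : Complex.sinh (ζ - (t + π * Complex.I)) = - Complex.sinh (ζ - t) := by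
    have := sinh_add_pi_I (ζ - (t + π * Complex.I))
    rw [show (ζ : ℂ) - (t + π * Complex.I) + π * Complex.I = ζ - t by ring] at this
    rw [this]; simp
  rw [e1, ← add_assoc, sinh_add_pi_I, h.period hN, h.period hN, neg_mul_neg]

lemma JEig.Wz_bdd (h : JEig N ζ ψ Λ) (hζ : 0 < ζ) (hN : Even N) :
    ∃ D, ∀ t : ℂ, -ζ / 2 ≤ t.re → t.re ≤ ζ / 2 → ‖Wz ζ N Λ t‖ ≤ D := by
  apply period_bound (h.Wz_period hN)
  unfold Wz
  refine ContinuousOn.sub (ContinuousOn.div ?_ ?_ ?_) continuousOn_const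
  · have := h.diff.continuous
    fun_prop
  · exact ((Pz_diff ζ).continuous.pow N).continuousOn
  · intro t ht; exact pow_ne_zero N (Pz_ne hζ ht.1 ht.2)

lemma JEig.Wz_reflect (h : JEig N ζ ψ Λ) (t : ℂ) :
    Wz ζ N Λ (-starRingEnd ℂ t) = starRingEnd ℂ (Wz ζ N Λ t) := by
  unfold Wz Pz
  have e1 : Λ (ζ + t) = starRingEnd ℂ (Λ (-starRingEnd ℂ t)) := by
    rw [← h.reflect]; simp
  have e2 : Λ (ζ + -starRingEnd ℂ t) = starRingEnd ℂ (Λ t) := by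
    rw [← h.reflect]; ring_nf
  rw [e1, e2]
  simp only [map_sub, map_div₀, map_mul, map_pow, map_one, ← Complex.sinh_conj, Complex.conj_conj,
    map_add, Complex.conj_ofReal]
  ring_nf

lemma JEig.Wz_edge (h : JEig N ζ ψ Λ) (hζ : 0 < ζ) {t : ℂ} (ht : t.re = -ζ / 2) :
    ‖Wz ζ N Λ t‖ ≤ 3 := by
  rw [h.Wz_eq hζ (by linarith) (by linarith)]
  have h1 := h.boundX t ht
  have hs : Complex.sinh (ζ + t) ≠ 0 := sinh_ne_zero_of_re (by simp; linarith)
  have hs2 : Complex.sinh (ζ - t) ≠ 0 := sinh_ne_zero_of_re (by simp; linarith)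
  have h2 : ‖Complex.sinh t‖ = ‖Complex.sinh (ζ + t)‖ := by
    have : (‖Complex.sinh t‖) ^ 2 = ‖Complex.sinh (ζ + t)‖ ^ 2 := by
      rw [norm_sinh_sq, norm_sinh_sq]
      have : (ζ + t).re = - t.re := by simp; linarith
      rw [this]; simp
    exact (pow_left_inj₀ (norm_nonneg _) (norm_nonneg _) two_ne_zero).mp this
  unfold Pz
  rw [norm_div, norm_mul, norm_pow, norm_pow, norm_mul, mul_pow, h2]
  have p1 := pow_pos (norm_pos_iff.mpr hs) N
  have p2 := pow_pos (norm_pos_iff.mpr hs2) N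
  rw [div_le_iff₀ (by positivity)]
  nlinarith

lemma JEig.Wz_edge2 (h : JEig N ζ ψ Λ) (hζ : 0 < ζ) {t : ℂ} (ht : t.re = ζ / 2) :
    ‖Wz ζ N Λ t‖ ≤ 3 := by
  have h1 := h.Wz_edge hζ (t := -starRingEnd ℂ t) (by simp; linarith)
  rw [h.Wz_reflect] at h1
  simpa using h1

def Gz (ζ : ℝ) (N : ℕ) (ψ : J N → ℂ) (t : ℂ) : ℂ :=
  (Sz ζ t * Complex.cos (wz ζ t)) ^ N * Xq ζ ψ t / Pz ζ t ^ N

lemma JEig.Gz_eq (h : JEig N ζ ψ Λ) (hζ : 0 < ζ) {t : ℂ} (h1 : -ζ / 2 ≤ t.re) (h2 : t.re ≤ ζ / 2)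
    (ht : t ≠ 0) :
    Gz ζ N ψ t = Wz ζ N Λ t * (Complex.cos (wz ζ t) / Qz ζ t) ^ N := by
  rw [h.Wz_eq hζ h1 h2, Gz, Sz_eq ht]
  simp only [mul_pow, div_pow]
  ring

lemma JEig.Gz_edge (h : JEig N ζ ψ Λ) (hζ : 0 < ζ) {t : ℂ} (ht : t.re = -ζ / 2 ∨ t.re = ζ / 2) :
    ‖Gz ζ N ψ t‖ ≤ 3 := by
  have hne : t ≠ 0 := by
    rintro rfl
    simp at ht
    rcases ht with h | h <;> linarith
  have e : π / (2 * ζ) * (ζ / 2) = π / 4 := by field_simp; norm_num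
  have h3 : ‖Complex.cos (wz ζ t)‖ = ‖Qz ζ t‖ := by
    apply (pow_left_inj₀ (norm_nonneg _) (norm_nonneg _) two_ne_zero).mp
    rw [Qz, norm_cos_sq, norm_sin_sq, wz_re]
    rcases ht with ht | ht
    · rw [ht, show π / (2 * ζ) * (-ζ / 2) = -(π / 4) by rw [← e]; ring, Real.cos_neg, Real.sin_neg,
        Real.cos_pi_div_four, Real.sin_pi_div_four]; ring
    · rw [ht, e, Real.cos_pi_div_four, Real.sin_pi_div_four]
  have hl : -ζ / 2 ≤ t.re := by rcases ht with h | h <;> linarith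
  have hr : t.re ≤ ζ / 2 := by rcases ht with h | h <;> linarith
  have hq := Qz_ne hζ hl hr hne
  rw [h.Gz_eq hζ hl hr hne, norm_mul, norm_pow, norm_div, h3, div_self (norm_ne_zero_iff.mpr hq),
    one_pow, mul_one]
  rcases ht with ht | ht
  · exact h.Wz_edge hζ ht
  · exact h.Wz_edge2 hζ ht

lemma JEig.Gz_le (h : JEig N ζ ψ Λ) (hζ : 0 < ζ) (hN : Even N) {t : ℂ}
    (h1 : -ζ / 2 ≤ t.re) (h2 : t.re ≤ ζ / 2) : ‖Gz ζ N ψ t‖ ≤ 3 := by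
  obtain ⟨D, hD⟩ := h.Wz_bdd hζ hN
  have hp : 0 < π / (2 * ζ) := by have := Real.pi_pos; positivity
  set K := Real.sinh (π / (2 * ζ)) with hK
  have hKp : 0 < K := Real.sinh_pos_iff.mpr hp
  refine strip_le (a := -ζ / 2) (b := ζ / 2) (D := D * (1 + 1 / K) ^ N) (by linarith) ?_ ?_ ?_ ?_ t h1 h2
  · unfold Gz Sz
    apply DifferentiableOn.div
    · apply DifferentiableOn.mul
      · apply DifferentiableOn.pow
        apply DifferentiableOn.mul
        · apply DifferentiableOn.div
          · exact (dslope_diff Complex.differentiable_sinh).differentiableOn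
          · exact (dslope_diff (Qz_diff ζ)).differentiableOn
          · intro t ht; exact dQz_ne hζ ht.1 ht.2
        · unfold wz; fun_prop
      · exact Xq_diff.differentiableOn
    · exact ((Pz_diff ζ).pow N).differentiableOn
    · intro t ht; exact pow_ne_zero N (Pz_ne hζ ht.1 ht.2)
  · intro z z1 z2 z3
    have hz : z ≠ 0 := by rintro rfl; simp at z3; linarith
    have hq := Qz_ne hζ z1 z2 hz
    rw [h.Gz_eq hζ z1 z2 hz, norm_mul, norm_pow, norm_div]
    have hd := hD z z1 z2
    have hd0 : 0 ≤ D := (norm_nonneg _).trans hd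
    have hQ : K ≤ ‖Qz ζ z‖ := by
      apply (pow_le_pow_iff_left₀ hKp.le (norm_nonneg _) two_ne_zero).mp
      rw [Qz, norm_sin_sq, wz_im, ← sq_abs (Real.sinh (_ * _)), Real.abs_sinh, abs_mul, abs_of_pos hp]
      have : K ≤ Real.sinh (π / (2 * ζ) * |z.im|) := Real.sinh_le_sinh.mpr (by nlinarith)
      nlinarith [sq_nonneg (Real.sin (wz ζ z).re)]
    have hC : ‖Complex.cos (wz ζ z)‖ ≤ ‖Qz ζ z‖ + 1 := by
      apply (pow_le_pow_iff_left₀ (norm_nonneg _) (by positivity) two_ne_zero).mp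
      have e1 := norm_cos_sq (wz ζ z)
      have e2 := norm_sin_sq (wz ζ z)
      have e3 := Real.cos_sq_le_one (wz ζ z).re
      rw [Qz]
      nlinarith [norm_nonneg (Complex.sin (wz ζ z)), sq_nonneg (Real.sin (wz ζ z).re)]
    have hr : ‖Complex.cos (wz ζ z)‖ / ‖Qz ζ z‖ ≤ 1 + 1 / K := by
      have hqp := norm_pos_iff.mpr hq
      calc _ ≤ (‖Qz ζ z‖ + 1) / ‖Qz ζ z‖ := by gcongr
        _ = 1 + 1 / ‖Qz ζ z‖ := by field_simp
        _ ≤ 1 + 1 / K := by gcongr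
    gcongr
  · intro z hz; exact h.Gz_edge hζ (Or.inl hz)
  · intro z hz; exact h.Gz_edge hζ (Or.inr hz)

lemma JEig.Wz_axis (h : JEig N ζ ψ Λ) (hζ : 0 < ζ) (hN : Even N) (hN0 : N ≠ 0) {t : ℂ}
    (ht : t.re = 0) :
    ‖Wz ζ N Λ t‖ ≤ 3 * Real.tanh (π ^ 2 / (4 * ζ)) ^ N := by
  obtain ⟨n, hn1, hn2⟩ := period_reduce t
  rw [← period_int (h.Wz_period hN) n t]
  generalize t + n * (π * Complex.I) = z at hn1 hn2
  rw [ht] at hn2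
  have hY : 0 < π ^ 2 / (4 * ζ) := by have := Real.pi_pos; positivity
  have hT : 0 ≤ Real.tanh (π ^ 2 / (4 * ζ)) := by
    rw [Real.tanh_eq_sinh_div_cosh]
    exact div_nonneg (Real.sinh_pos_iff.mpr hY).le (Real.cosh_pos _).le
  by_cases hz : z = 0
  · rw [h.Wz_eq hζ (by linarith) (by linarith), hz]
    simp [hN0]
    positivity
  have hq := Qz_ne hζ (t := z) (by linarith) (by linarith) hz
  have hG := h.Gz_le hζ hN (t := z) (by linarith) (by linarith)
  rw [h.Gz_eq hζ (by linarith) (by linarith) hz, norm_mul, norm_pow, norm_div] at hG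
  have hp : 0 < π / (2 * ζ) := by have := Real.pi_pos; positivity
  have hCp : ‖Complex.cos (wz ζ z)‖ = Real.cosh (π / (2 * ζ) * |z.im|) := by
    apply (pow_left_inj₀ (norm_nonneg _) (Real.cosh_pos _).le two_ne_zero).mp
    rw [norm_cos_sq, wz_re, wz_im, hn2, Real.cosh_sq, mul_zero, Real.cos_zero,
      ← sq_abs (Real.sinh (_ * z.im)), Real.abs_sinh, abs_mul, abs_of_pos hp]; ring
  have hSp : ‖Qz ζ z‖ = Real.sinh (π / (2 * ζ) * |z.im|) := by
    have h0 : 0 ≤ Real.sinh (π / (2 * ζ) * |z.im|) := Real.sinh_nonneg_iff.mpr (by positivity)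
    apply (pow_left_inj₀ (norm_nonneg _) h0 two_ne_zero).mp
    rw [Qz, norm_sin_sq, wz_re, wz_im, hn2, mul_zero, Real.sin_zero,
      ← sq_abs (Real.sinh (_ * z.im)), Real.abs_sinh, abs_mul, abs_of_pos hp]; ring
  have hSpos : 0 < Real.sinh (π / (2 * ζ) * |z.im|) := by rw [← hSp]; exact norm_pos_iff.mpr hq
  have hcpos := Real.cosh_pos (π / (2 * ζ) * |z.im|)
  rw [hCp, hSp] at hG
  have htan : Real.sinh (π / (2 * ζ) * |z.im|) / Real.cosh (π / (2 * ζ) * |z.im|)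
      ≤ Real.tanh (π ^ 2 / (4 * ζ)) := by
    rw [← Real.tanh_eq_sinh_div_cosh]
    apply tanh_mono
    calc π / (2 * ζ) * |z.im| ≤ π / (2 * ζ) * (π / 2) := by gcongr
      _ = _ := by field_simp; norm_num
  have hpos : 0 < (Real.cosh (π / (2 * ζ) * |z.im|) / Real.sinh (π / (2 * ζ) * |z.im|)) ^ N := by positivity
  calc ‖Wz ζ N Λ z‖ ≤ 3 * (Real.sinh (π / (2 * ζ) * |z.im|) / Real.cosh (π / (2 * ζ) * |z.im|)) ^ N := by
        rw [← le_div_iff₀ hpos] at hG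
        refine hG.trans (le_of_eq ?_)
        rw [div_pow, div_pow]; field_simp
    _ ≤ _ := by gcongr

lemma axis_lower (ζ₁ : ℝ) (h1 : 0 < ζ₁) : ∃ N₀ : ℕ, ∀ N : ℕ, N₀ ≤ N → Even N → ∀ ζ, ζ₁ ≤ ζ →
    ∀ (ψ : J N → ℂ) (Λ : ℂ → ℂ), JEig N ζ ψ Λ → ∀ t : ℂ, t.re = 0 →
    1 / 2 * ‖Complex.sinh (ζ - t)‖ ^ N ≤ ‖Λ t‖ := by
  set κ := Real.tanh (π ^ 2 / (4 * ζ₁)) with hκ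
  have hY : 0 < π ^ 2 / (4 * ζ₁) := by have := Real.pi_pos; positivity
  have k0 : 0 ≤ κ := by
    rw [hκ, Real.tanh_eq_sinh_div_cosh]
    exact div_nonneg (Real.sinh_pos_iff.mpr hY).le (Real.cosh_pos _).le
  have k1 : κ < 1 := Real.tanh_lt_one _
  have hlim := tendsto_pow_atTop_nhds_zero_of_lt_one k0 k1
  obtain ⟨N₀, hN₀⟩ := eventually_atTop.mp (hlim.eventually (gt_mem_nhds (show (0:ℝ) < 1 / 4 by norm_num)))
  refine ⟨N₀ + 1, fun N hN hE ζ hζ ψ Λ h t ht => ?_⟩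
  have hζ0 : 0 < ζ := by linarith
  have hW := h.Wz_axis hζ0 hE (by omega) ht
  have hk : Real.tanh (π ^ 2 / (4 * ζ)) ≤ κ := by
    apply tanh_mono
    gcongr
  have hT : 0 ≤ Real.tanh (π ^ 2 / (4 * ζ)) := by
    have hY : 0 < π ^ 2 / (4 * ζ) := by have := Real.pi_pos; positivity
    rw [Real.tanh_eq_sinh_div_cosh]
    exact div_nonneg (Real.sinh_pos_iff.mpr hY).le (Real.cosh_pos _).le
  have hW2 : ‖Wz ζ N Λ t‖ ≤ 3 / 4 := by
    have := pow_le_pow_left₀ hT hk N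
    have := hN₀ N (by omega)
    linarith
  have hP := pow_ne_zero N (Pz_ne hζ0 (t := t) (by linarith) (by linarith))
  have hΛ : Λ t * Λ (ζ + t) = Pz ζ t ^ N * (1 + Wz ζ N Λ t) := by
    unfold Wz; field_simp; ring
  have hct : -starRingEnd ℂ t = t := by apply Complex.ext <;> simp [ht]
  have e1 : ‖Λ (ζ + t)‖ = ‖Λ t‖ := by
    rw [← h.norm_reflect t]; congr 2
    conv_lhs => rw [← hct]
    ring
  have e2 : ‖Pz ζ t‖ = ‖Complex.sinh (ζ - t)‖ ^ 2 := by
    unfold Pz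
    rw [norm_mul, sq]; congr 1
    have : (ζ : ℂ) + t = starRingEnd ℂ (ζ - t) := by
      rw [map_sub, Complex.conj_ofReal]; conv_lhs => rw [← hct]
      ring
    rw [this, Complex.sinh_conj]; simp
  have e3 := congrArg norm hΛ
  rw [norm_mul, norm_mul, e1, norm_pow, e2] at e3
  have e4 : 1 / 4 ≤ ‖1 + Wz ζ N Λ t‖ := by
    have := norm_sub_le (1 + Wz ζ N Λ t) (Wz ζ N Λ t)
    simp at this
    linarith
  apply (pow_le_pow_iff_left₀ (by positivity) (norm_nonneg _) two_ne_zero).mp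
  rw [sq ‖Λ t‖, e3, mul_pow, ← pow_mul, ← pow_mul, mul_comm N 2]
  have : 0 ≤ ‖Complex.sinh (ζ - t)‖ ^ (2 * N) := by positivity
  nlinarith

end SixVertexFE

namespace SixVertexFE
open Matrix

lemma TM_continuous {X A : Type} [TopologicalSpace X] [Fintype A] [DecidableEq A]
    (L : X → Bool → Bool → Matrix A A ℂ) (hL : ∀ s s' i j, Continuous fun x => L x s s' i j)
    (N : ℕ) (σ τ : J N) : Continuous fun x => TM (L x) N σ τ := by
  have h1 : ∀ N (σ τ : J N) i j, Continuous fun x => mono (L x) σ τ i j := by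
    intro N
    induction N with
    | zero => intro σ τ i j; simp only [mono_zero]; exact continuous_const
    | succ n ih =>
      intro σ τ i j
      simp only [mono_succ, Matrix.mul_apply]
      exact continuous_finsetSum _ fun k _ => (hL _ _ _ _).mul (ih _ _ _ _)
  simp only [TM, Matrix.of_apply, Matrix.trace, Matrix.diag_apply]
  exact continuous_finsetSum _ fun k _ => h1 _ _ _ _ _

lemma Lw_continuous {X : Type} [TopologicalSpace X] {a b c : X → ℂ} (ha : Continuous a)
    (hb : Continuous b) (hc : Continuous c) (s s' i j : Bool) :
    Continuous fun x => Lw (a x) (b x) (c x) s s' i j := by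
  unfold Lw
  simp only [Matrix.of_apply]
  split_ifs <;> first | assumption | exact continuous_const

lemma unit_entry {N : ℕ} {v : J N → ℂ} (hv : star v ⬝ᵥ v = 1) (σ : J N) : ‖v σ‖ ≤ 1 := by
  have h1 : ((∑ σ, ‖v σ‖ ^ 2 : ℝ) : ℂ) = 1 := by
    rw [← hv]; push_cast
    simp only [dotProduct, Pi.star_apply]
    refine Finset.sum_congr rfl fun x _ => ?_
    rw [← Complex.conj_mul']; rfl
  have h2 : ∑ σ, ‖v σ‖ ^ 2 = 1 := by exact_mod_cast h1
  have h3 : ‖v σ‖ ^ 2 ≤ 1 := by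
    rw [← h2]
    exact Finset.single_le_sum (f := fun σ => ‖v σ‖ ^ 2) (fun i _ => by positivity) (Finset.mem_univ σ)
  nlinarith [norm_nonneg (v σ)]

lemma overlap_nonzero {N : ℕ} {ζ : ℝ} {ψ v : J N → ℂ} {Λ : ℂ → ℂ} (h : JEig N ζ ψ Λ)
    (hv : star v ⬝ᵥ v = 1) (hov : (1 : ℝ) / 2 ^ N ≤ ‖star ψ ⬝ᵥ v‖ ^ 2)
    (t s μ : ℂ) (hs : s ≠ 0) (A B : Matrix (J N) (J N) ℂ) (hT : Tz N ζ t = s • A)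
    (hB : B *ᵥ v = μ • v) (ε : ℝ) (hAB : ∀ σ τ, ‖A σ τ - B σ τ‖ ≤ ε)
    (hε : 4 ^ N * ε < ‖μ‖ / 2 ^ N) : Λ t ≠ 0 := by
  intro h0
  have h1 : star ψ ᵥ* A = 0 := by
    have := h.left t
    rw [h0, zero_smul, hT, Matrix.vecMul_smul] at this
    exact (smul_eq_zero.mp this).resolve_left hs
  have h2 : star ψ ⬝ᵥ ((B - A) *ᵥ v) = μ * (star ψ ⬝ᵥ v) := by
    rw [Matrix.sub_mulVec, dotProduct_sub, hB, dotProduct_smul, Matrix.dotProduct_mulVec _ A, h1]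
    simp
  have h3 : ‖star ψ ⬝ᵥ ((B - A) *ᵥ v)‖ ≤ 4 ^ N * ε := by
    simp only [dotProduct, Matrix.mulVec, Finset.mul_sum]
    have hb : ∀ σ τ : J N, ‖star ψ σ * ((B - A) σ τ * v τ)‖ ≤ ε := by
      intro σ τ
      rw [norm_mul, norm_mul, Pi.star_apply, norm_star, Matrix.sub_apply, norm_sub_rev]
      have e1 := unit_entry h.unit σ
      have e2 := unit_entry hv τ
      have e3 := hAB σ τ
      have e4 : 0 ≤ ε := (norm_nonneg _).trans e3
      calc ‖ψ σ‖ * (‖A σ τ - B σ τ‖ * ‖v τ‖) ≤ 1 * (ε * 1) := by gcongr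
        _ = ε := by ring
    refine (norm_sum_le _ _).trans ?_
    calc _ ≤ ∑ σ : J N, ∑ τ : J N, ε := Finset.sum_le_sum fun σ _ =>
            (norm_sum_le _ _).trans (Finset.sum_le_sum fun τ _ => hb σ τ)
      _ = 4 ^ N * ε := by
        simp [Finset.card_univ, ← mul_assoc, ← mul_pow]; norm_num
  rw [h2, norm_mul] at h3
  have h4 : (1 : ℝ) / 2 ^ N ≤ ‖star ψ ⬝ᵥ v‖ := by
    have e1 : (1 : ℝ) / 2 ^ N ≤ 1 := by
      rw [div_le_one (by positivity)]; exact one_le_pow₀ (by norm_num)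
    by_contra hc
    push Not at hc
    nlinarith [norm_nonneg (star ψ ⬝ᵥ v)]
  have h5 : ‖μ‖ / 2 ^ N ≤ ‖μ‖ * ‖star ψ ⬝ᵥ v‖ := by
    rw [div_eq_mul_one_div]; gcongr
  linarith

def Good (N : ℕ) (ζ : ℝ) : Prop := ∃ (ψ : J N → ℂ) (Λ : ℂ → ℂ), JEig N ζ ψ Λ ∧
  ∀ t : ℂ, 0 ≤ t.re → t.re ≤ ζ → Λ t ≠ 0

lemma ne_of_reduced {f : ℂ → ℂ} (hp : ∀ t, f (t + π * Complex.I) = f t) {a b : ℝ}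
    (h : ∀ t : ℂ, a ≤ t.re → t.re ≤ b → |t.im| ≤ π / 2 → f t ≠ 0) (t : ℂ) (h1 : a ≤ t.re)
    (h2 : t.re ≤ b) : f t ≠ 0 := by
  obtain ⟨n, hn1, hn2⟩ := period_reduce t
  rw [← period_int hp n t]
  exact h _ (by rw [hn2]; exact h1) (by rw [hn2]; exact h2) hn1

lemma Good_step (ζ₁ ζ₂ : ℝ) (h1 : 0 < ζ₁) (N : ℕ) (hE : Even N)
    (hax : ∀ ζ, ζ₁ ≤ ζ → ∀ (ψ : J N → ℂ) (Λ : ℂ → ℂ), JEig N ζ ψ Λ → ∀ t : ℂ, t.re = 0 →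
      1 / 2 * ‖Complex.sinh (ζ - t)‖ ^ N ≤ ‖Λ t‖) :
    ∃ δ > 0, ∀ ζ ∈ Set.Icc ζ₁ ζ₂, ∀ ζ' ∈ Set.Icc ζ₁ ζ₂, |ζ - ζ'| < δ → Good N ζ → Good N ζ' := by
  have hs1 := Real.sinh_pos_iff.mpr h1
  set ε : ℝ := 1 / 4 * Real.sinh ζ₁ ^ N / 8 ^ N with hε
  have hεp : 0 < ε := by positivity
  let f : ℝ × ℝ × ℝ → (J N → J N → ℂ) := fun p => fun σ τ =>
    Tz N p.1 ((p.1 * p.2.1 : ℝ) + (p.2.2 : ℂ) * Complex.I) σ τ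
  have hf : Continuous f := by
    refine continuous_pi fun σ => continuous_pi fun τ => ?_
    refine TM_continuous (fun p : ℝ × ℝ × ℝ =>
      Lz p.1 ((p.1 * p.2.1 : ℝ) + (p.2.2 : ℂ) * Complex.I)) (fun s s' i j => ?_) N σ τ
    unfold Lz
    exact Lw_continuous (by fun_prop) (by fun_prop) (by fun_prop) _ _ _ _
  have hK : IsCompact (Set.Icc ζ₁ ζ₂ ×ˢ (Set.Icc (0 : ℝ) 1 ×ˢ Set.Icc (-(π / 2)) (π / 2))) :=
    isCompact_Icc.prod (isCompact_Icc.prod isCompact_Icc)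
  have huc := hK.uniformContinuousOn_of_continuous hf.continuousOn
  obtain ⟨δ, hδ, hu⟩ := Metric.uniformContinuousOn_iff.mp huc ε hεp
  refine ⟨δ, hδ, fun ζ hζ ζ' hζ' hd ⟨v, Λ, hJ, hne⟩ => ?_⟩
  have hζ0 : 0 < ζ := by linarith [hζ.1]
  have hζ0' : 0 < ζ' := by linarith [hζ'.1]
  obtain ⟨U, Λ', hU, hD⟩ := exists_joint N ζ' hζ0'
  obtain ⟨j, hj⟩ := exists_overlap hU v hJ.unit
  have hJ' := JEig_of_diag hU hD j
  refine ⟨_, _, hJ', ?_⟩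
  refine ne_of_reduced (hJ'.period hE) fun t t1 t2 t3 => ?_
  set x := t.re / ζ' with hx
  have hx0 : 0 ≤ x := div_nonneg t1 hζ0'.le
  have hx1 : x ≤ 1 := (div_le_one hζ0').mpr t2
  have ht' : t = ((ζ' * x : ℝ) + (t.im : ℂ) * Complex.I) := by
    rw [hx, mul_div_cancel₀ _ hζ0'.ne', Complex.re_add_im]
  set t₀ : ℂ := ((ζ * x : ℝ) + (t.im : ℂ) * Complex.I) with ht₀
  have hre : t₀.re = ζ * x := by
    rw [ht₀, Complex.add_re, Complex.ofReal_re]; simp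
  have h0r : 0 ≤ t₀.re := by rw [hre]; positivity
  have h1r : t₀.re ≤ ζ := by rw [hre]; nlinarith
  have hlow := hJ.lower hζ0 hE hne (hax ζ hζ.1 _ _ hJ) t₀ h0r h1r
  have hlow2 : 1 / 2 * Real.sinh ζ₁ ^ N ≤ ‖Λ t₀‖ := by
    refine le_trans ?_ hlow
    have e1 := Fz_lower ζ hζ0 t₀ h0r h1r
    have e2 := Real.sinh_le_sinh.mpr hζ.1
    have e3 := e2.trans e1
    gcongr
  have hdist := hu (ζ', x, t.im) ⟨hζ', ⟨hx0, hx1⟩, abs_le.mp t3⟩ (ζ, x, t.im)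
    ⟨hζ, ⟨hx0, hx1⟩, abs_le.mp t3⟩ (by
      rw [Prod.dist_eq, dist_self, max_eq_left dist_nonneg, Real.dist_eq, abs_sub_comm]
      exact hd)
  refine overlap_nonzero hJ' hJ.unit hj t 1 (Λ t₀) one_ne_zero (Tz N ζ' t) (Tz N ζ t₀)
    (one_smul _ _).symm (hJ.eig t₀) ε (fun σ τ => ?_) ?_
  · have e1 : dist (f (ζ', x, t.im) σ τ) (f (ζ, x, t.im) σ τ) ≤ dist (f (ζ', x, t.im)) (f (ζ, x, t.im)) :=
      (dist_le_pi_dist (f (ζ', x, t.im) σ) (f (ζ, x, t.im) σ) τ).trans (dist_le_pi_dist _ _ σ)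
    rw [dist_eq_norm (f (ζ', x, t.im) σ τ)] at e1
    have e2 : f (ζ', x, t.im) σ τ = Tz N ζ' t σ τ := by
      simp only [f]; rw [← ht']
    have e3 : f (ζ, x, t.im) σ τ = Tz N ζ t₀ σ τ := rfl
    rw [e2, e3] at e1
    linarith
  · rw [lt_div_iff₀ (by positivity)]
    have : (4 : ℝ) ^ N * ε * 2 ^ N = 1 / 4 * Real.sinh ζ₁ ^ N := by
      rw [hε, mul_right_comm, ← mul_pow]; norm_num
      field_simp
    rw [this]
    have : 0 < Real.sinh ζ₁ ^ N := by positivity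
    linarith

lemma Good_prop (ζ₁ ζ₂ : ℝ) (h1 : 0 < ζ₁) (h12 : ζ₁ ≤ ζ₂) (N : ℕ) (hE : Even N)
    (hax : ∀ ζ, ζ₁ ≤ ζ → ∀ (ψ : J N → ℂ) (Λ : ℂ → ℂ), JEig N ζ ψ Λ → ∀ t : ℂ, t.re = 0 →
      1 / 2 * ‖Complex.sinh (ζ - t)‖ ^ N ≤ ‖Λ t‖) (hG : Good N ζ₂) : Good N ζ₁ := by
  obtain ⟨δ, hδ, hstep⟩ := Good_step ζ₁ ζ₂ h1 N hE hax
  obtain ⟨n, hn⟩ := exists_nat_gt ((ζ₂ - ζ₁) / δ)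
  have hn0 : (0 : ℝ) < n := lt_of_le_of_lt (div_nonneg (by linarith) hδ.le) hn
  have hstp : (ζ₂ - ζ₁) / n < δ := by
    rw [div_lt_iff₀ hδ] at hn
    rw [div_lt_iff₀ hn0]; linarith
  set s := (ζ₂ - ζ₁) / n with hs
  have hs0 : 0 ≤ s := div_nonneg (by linarith) hn0.le
  have hns : n * s = ζ₂ - ζ₁ := by rw [hs]; field_simp
  have hind : ∀ k : ℕ, k ≤ n → Good N (ζ₂ - k * s) := by
    intro k
    induction k with
    | zero => intro _; simpa using hG
    | succ k ih =>
      intro hk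
      have hk' : ((k : ℝ) + 1) ≤ n := by exact_mod_cast hk
      have hk0 : (0 : ℝ) ≤ k := Nat.cast_nonneg k
      have hb : ((k : ℝ) + 1) * s ≤ n * s := by gcongr
      refine hstep (ζ₂ - k * s) ⟨by nlinarith, by nlinarith⟩ _ ⟨?_, ?_⟩ ?_ (ih (by omega))
      · push_cast; linarith
      · push_cast; nlinarith
      · push_cast
        rw [show ζ₂ - k * s - (ζ₂ - (k + 1) * s) = s by ring, abs_of_nonneg hs0]
        exact hstp
  have := hind n le_rfl
  rwa [hns, sub_sub_cancel] at this

end SixVertexFE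

namespace SixVertexFE
open Matrix

/-- alternating (Neel) configuration starting with `x` -/
def alt : (N : ℕ) → Bool → J N
  | 0, _ => Fin.elim0
  | n + 1, x => Fin.cons x (alt n (!x))

def altEnd : ℕ → Bool → Bool
  | 0, x => x
  | n + 1, x => altEnd n (!x)

lemma altEnd_even (m : ℕ) (x : Bool) : altEnd (2 * m) x = x := by
  induction m with
  | zero => rfl
  | succ k ih => rw [show 2 * (k + 1) = 2 * k + 1 + 1 by ring, altEnd, altEnd, Bool.not_not, ih]

lemma Lw0 (α : ℂ) (s s' h h' : Bool) :
    Lw α 0 1 s s' h h' = if h = s' ∧ h' = s then (if s = s' then α else 1) else 0 := by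
  cases s <;> cases s' <;> cases h <;> cases h' <;> simp [Lw]

lemma mono_alt (α : ℂ) (N : ℕ) : ∀ (x : Bool) (σ : J N) (h : Bool),
    mono (Lw α 0 1) σ (alt N x) h (altEnd N x) = if h = x ∧ σ = alt N (!x) then 1 else 0 := by
  induction N with
  | zero =>
    intro x σ h
    rw [mono_zero]
    have : σ = alt 0 (!x) := Subsingleton.elim _ _
    by_cases hx : h = x
    · rw [if_pos ⟨hx, this⟩, altEnd, hx, Matrix.one_apply_eq]
    · rw [if_neg fun hh => hx hh.1, altEnd, Matrix.one_apply_ne hx]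
  | succ n ih =>
    intro x σ h
    have e1 : (alt (n + 1) x) 0 = x := by simp [alt]
    have e2 : (fun i : Fin n => alt (n + 1) x i.succ) = alt n (!x) := by ext i; simp [alt]
    have e3 : σ = alt (n + 1) (!x) ↔ σ 0 = (!x) ∧ (fun i : Fin n => σ i.succ) = alt n x := by
      constructor
      · rintro rfl; constructor
        · simp [alt]
        · ext i; simp [alt]
      · rintro ⟨a, b⟩
        ext i
        refine Fin.cases ?_ (fun k => ?_) i
        · simp [alt, a]
        · simpa [alt] using congrFun b k
    rw [mono_succ, Matrix.mul_apply]
    simp only [e1, Lw0, altEnd]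
    have e2' : Fin.tail (alt (n + 1) x) = alt n (!x) := e2
    simp only [e2', ih, Bool.not_not, e3]
    rw [Finset.sum_eq_single (σ 0)]
    · by_cases a1 : h = x <;> by_cases a2 : σ 0 = (!x) <;> simp [a1, a2]
      · rfl
    · intro b _ hb; simp [hb]
    · simp

lemma mono_alt_row (α : ℂ) (N : ℕ) (x : Bool) (σ : J (N + 1)) (h' : Bool) :
    mono (Lw α 0 1) σ (alt (N + 1) x) (!x) h' = 0 := by
  rw [mono_succ, Matrix.mul_apply]
  refine Finset.sum_eq_zero fun k _ => ?_
  have e1 : (alt (N + 1) x) 0 = x := by simp [alt]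
  rw [e1, Lw0]; simp

lemma TM_alt (α : ℂ) (N : ℕ) (hE : Even N) (h0 : N ≠ 0) (x : Bool) (σ : J N) :
    TM (Lw α 0 1) N σ (alt N x) = if σ = alt N (!x) then 1 else 0 := by
  obtain ⟨m, hm⟩ := hE
  have he : altEnd N x = x := by rw [hm, ← two_mul, altEnd_even]
  have h1 := mono_alt α N x σ x
  rw [he] at h1
  obtain ⟨n, rfl⟩ := Nat.exists_eq_succ_of_ne_zero h0
  have h2 := mono_alt_row α n x σ (!x)
  simp only [TM, Matrix.of_apply, Matrix.trace, Matrix.diag_apply, Fintype.sum_bool]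
  cases x
  · simp only [Bool.not_false] at *
    rw [h1, h2]; simp
  · simp only [Bool.not_true] at *
    rw [h1, h2]; simp

def neel (N : ℕ) : J N → ℂ := ((Real.sqrt 2)⁻¹ : ℂ) •
  ((Pi.single (alt N true) 1 : J N → ℂ) + Pi.single (alt N false) 1)

lemma alt_ne (N : ℕ) (h0 : N ≠ 0) : alt N true ≠ alt N false := by
  obtain ⟨n, rfl⟩ := Nat.exists_eq_succ_of_ne_zero h0
  intro h
  have := congrFun h 0
  simp [alt] at this

lemma neel_unit (N : ℕ) (h0 : N ≠ 0) : star (neel N) ⬝ᵥ neel N = 1 := by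
  have hne := alt_ne N h0
  have h1 : star (neel N) = neel N := by
    ext σ
    simp only [neel, Pi.star_apply, Pi.smul_apply, Pi.add_apply, Pi.single_apply, smul_eq_mul]
    rw [star_mul', star_inv₀]
    congr 1
    · congr 1
      exact Complex.conj_ofReal _
    · split_ifs <;> simp
  have h2 : ((Real.sqrt 2 : ℝ) : ℂ) * (Real.sqrt 2 : ℝ) = 2 := by
    rw [← Complex.ofReal_mul, Real.mul_self_sqrt (by norm_num)]; simp
  rw [h1]
  simp only [neel, smul_dotProduct, dotProduct_smul, dotProduct_add, dotProduct_single_one]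
  simp only [Pi.smul_apply, Pi.add_apply, Pi.single_eq_same, Pi.single_eq_of_ne hne, Pi.single_eq_of_ne hne.symm,
    smul_eq_mul]
  have h3 : ((Real.sqrt 2 : ℝ) : ℂ) ≠ 0 := by
    intro h; rw [h] at h2; norm_num at h2
  field_simp
  rw [sq, h2]; norm_num

lemma neel_eig (α : ℂ) (N : ℕ) (hE : Even N) (h0 : N ≠ 0) :
    TM (Lw α 0 1) N *ᵥ neel N = (1 : ℂ) • neel N := by
  rw [one_smul, neel, Matrix.mulVec_smul, Matrix.mulVec_add, Matrix.mulVec_single_one,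
    Matrix.mulVec_single_one]
  congr 1
  ext σ
  simp only [Pi.add_apply, Matrix.col_apply, TM_alt α N hE h0, Pi.single_apply, Bool.not_true,
    Bool.not_false]
  ring

lemma norm_sinh_le (z : ℂ) : ‖Complex.sinh z‖ ≤ Real.cosh z.re := by
  rw [Complex.sinh, Real.cosh_eq, norm_div]
  have : ‖(2 : ℂ)‖ = 2 := by simp
  rw [this]
  gcongr
  refine (norm_sub_le _ _).trans ?_
  rw [Complex.norm_exp, Complex.norm_exp]; simp

lemma Tz_scale (N : ℕ) (ζ : ℝ) (hζ : 0 < ζ) (t : ℂ) :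
    Tz N ζ t = Complex.sinh ζ ^ N •
      TM (Lw (Complex.sinh (ζ - t) / Complex.sinh ζ) (Complex.sinh t / Complex.sinh ζ) 1) N := by
  have hc : Complex.sinh ζ ≠ 0 := sinh_ne_zero_of_re (by simp; linarith)
  rw [← TM_smul, Tz]
  congr 1
  ext s s' i j
  simp only [Lz, Lw, Matrix.smul_apply, Matrix.of_apply, smul_eq_mul]
  split_ifs <;> field_simp <;> simp

lemma Good_base (ζ₁ : ℝ) (N : ℕ) (hE : Even N) (h0 : N ≠ 0) : ∃ ζ₂, ζ₁ ≤ ζ₂ ∧ Good N ζ₂ := by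
  set ε : ℝ := 1 / 2 / 8 ^ N with hε
  have hεp : 0 < ε := by positivity
  let f : ℂ × ℂ → (J N → J N → ℂ) := fun p => fun σ τ => TM (Lw p.1 p.2 1) N σ τ
  have hf : Continuous f := by
    refine continuous_pi fun σ => continuous_pi fun τ => ?_
    refine TM_continuous (fun p : ℂ × ℂ => Lw p.1 p.2 1) (fun s s' i j => ?_) N σ τ
    exact Lw_continuous (by fun_prop) (by fun_prop) (by fun_prop) _ _ _ _
  have hK : IsCompact (Metric.closedBall (0 : ℂ) 2 ×ˢ Metric.closedBall (0 : ℂ) 1) :=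
    (isCompact_closedBall _ _).prod (isCompact_closedBall _ _)
  have huc := hK.uniformContinuousOn_of_continuous hf.continuousOn
  obtain ⟨δ, hδ, hu⟩ := Metric.uniformContinuousOn_iff.mp huc ε hεp
  -- choose ζ large
  have hlim : Tendsto (fun x : ℝ => Real.exp (-x)) atTop (nhds 0) := Real.tendsto_exp_neg_atTop_nhds_zero
  have hδ' : 0 < min δ 1 / 4 := by positivity
  obtain ⟨X, hX⟩ := eventually_atTop.mp (hlim.eventually (gt_mem_nhds hδ'))
  set ζ := max (max ζ₁ (2 * X)) 2 with hζdef
  have hζ1 : ζ₁ ≤ ζ := (le_max_left _ _).trans (le_max_left _ _)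
  have hζX : X ≤ ζ / 2 := by
    have : 2 * X ≤ ζ := (le_max_right _ _).trans (le_max_left _ _)
    linarith
  have hζ2 : 2 ≤ ζ := le_max_right _ _
  have hζ0 : 0 < ζ := by linarith
  have hsinh : Real.exp ζ / 4 ≤ Real.sinh ζ := by
    rw [Real.sinh_eq]
    have e1 : Real.exp (-ζ) ≤ 1 := by rw [Real.exp_le_one_iff]; linarith
    have e2 : ζ + 1 ≤ Real.exp ζ := Real.add_one_le_exp ζ
    linarith
  have hsp : 0 < Real.sinh ζ := Real.sinh_pos_iff.mpr hζ0
  refine ⟨ζ, hζ1, ?_⟩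
  obtain ⟨U, Λ, hU, hD⟩ := exists_joint N ζ hζ0
  have hv := neel_unit N h0
  obtain ⟨j, hj⟩ := exists_overlap hU (neel N) hv
  have hJ := JEig_of_diag hU hD j
  refine ⟨_, _, hJ, ?_⟩
  have half : ∀ t : ℂ, 0 ≤ t.re → t.re ≤ ζ / 2 → Λ j t ≠ 0 := by
    intro t t0 t1
    have hc : ‖Complex.sinh ζ‖ = Real.sinh ζ := by
      rw [← Complex.ofReal_sinh, Complex.norm_real, Real.norm_of_nonneg hsp.le]
    have ha : ‖Complex.sinh (ζ - t) / Complex.sinh ζ‖ ≤ 2 := by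
      rw [norm_div, hc, div_le_iff₀ hsp]
      refine (norm_sinh_le _).trans ?_
      have e1 : Real.cosh ((ζ : ℂ) - t).re ≤ Real.cosh ζ := by
        apply cosh_mono
        simp only [Complex.sub_re, Complex.ofReal_re]
        rw [abs_le]; constructor <;> linarith
      refine e1.trans ?_
      rw [Real.cosh_eq, Real.sinh_eq]
      have e1 : Real.exp (-ζ) ≤ 1 := by rw [Real.exp_le_one_iff]; linarith
      have e2 : ζ + 1 ≤ Real.exp ζ := Real.add_one_le_exp ζ
      linarith
    have hb : ‖Complex.sinh t / Complex.sinh ζ‖ < min δ 1 := by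
      rw [norm_div, hc, div_lt_iff₀ hsp]
      refine lt_of_le_of_lt (norm_sinh_le _) ?_
      have e1 : Real.cosh t.re ≤ Real.cosh (ζ / 2) := by
        apply cosh_mono; rw [abs_of_nonneg t0]; exact t1
      have e2 : Real.cosh (ζ / 2) ≤ Real.exp (ζ / 2) := by
        rw [Real.cosh_eq]
        have : Real.exp (-(ζ / 2)) ≤ Real.exp (ζ / 2) := Real.exp_le_exp.mpr (by linarith)
        linarith
      have e3 := hX (ζ / 2) hζX
      have e4 : Real.exp (-(ζ / 2)) * Real.exp ζ = Real.exp (ζ / 2) := by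
        rw [← Real.exp_add]; ring_nf
      have e5 := Real.exp_pos ζ
      have e6 : 0 < min δ 1 := by positivity
      calc Real.cosh t.re ≤ Real.exp (ζ / 2) := e1.trans e2
        _ = Real.exp (-(ζ / 2)) * Real.exp ζ := e4.symm
        _ < min δ 1 / 4 * Real.exp ζ := by gcongr
        _ = min δ 1 * (Real.exp ζ / 4) := by ring
        _ ≤ min δ 1 * Real.sinh ζ := by gcongr
    set α := Complex.sinh (ζ - t) / Complex.sinh ζ
    set β := Complex.sinh t / Complex.sinh ζ
    have hdist := hu (α, β) ⟨by simpa using ha, by simpa using (hb.trans_le (min_le_right _ _)).le⟩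
      (α, 0) ⟨by simpa using ha, by simp⟩ (by
        rw [Prod.dist_eq, dist_self, max_eq_right dist_nonneg, dist_zero_right]
        exact hb.trans_le (min_le_left _ _))
    refine overlap_nonzero hJ hv hj t (Complex.sinh ζ ^ N) 1
      (pow_ne_zero _ (sinh_ne_zero_of_re (by simp; linarith))) _ (TM (Lw α 0 1) N)
      (Tz_scale N ζ hζ0 t) (neel_eig α N hE h0) ε (fun σ τ => ?_) ?_
    · have e1 : dist (f (α, β) σ τ) (f (α, 0) σ τ) ≤ dist (f (α, β)) (f (α, 0)) :=
        (dist_le_pi_dist (f (α, β) σ) (f (α, 0) σ) τ).trans (dist_le_pi_dist _ _ σ)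
      rw [dist_eq_norm (f (α, β) σ τ)] at e1
      exact e1.trans hdist.le
    · rw [lt_div_iff₀ (by positivity), hε, mul_right_comm, ← mul_pow]
      rw [show (4 : ℝ) * 2 = 8 by norm_num, norm_one, mul_div_cancel₀ _ (by positivity)]
      norm_num
  intro t t0 t1
  rcases le_total t.re (ζ / 2) with h | h
  · exact half t t0 h
  · have := half (ζ - starRingEnd ℂ t) (by simp; linarith) (by simp; linarith)
    rw [hJ.reflect] at this
    simpa using this

/-- Main spectral output -/
lemma spectral (ζ : ℝ) (hζ : 0 < ζ) : ∃ N₀ : ℕ, ∀ N : ℕ, N₀ ≤ N → Even N → 2 ≤ N →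
    ∀ (U : Matrix (J N) (J N) ℂ) (Λ : J N → ℂ → ℂ), Uᴴ * U = 1 →
      (∀ t, Tz N ζ t * U = U * diagonal fun j => Λ j t) → ∀ t : ℂ, 0 ≤ t.re → t.re ≤ ζ →
      ∃ j, 1 / 2 * Real.exp (Fz ζ t).re ^ N ≤ ‖Λ j t‖ := by
  obtain ⟨N₀, hN₀⟩ := axis_lower ζ hζ
  refine ⟨N₀, fun N hN hE h2 U Λ hU hD t t0 t1 => ?_⟩
  obtain ⟨ζ₂, h12, hG⟩ := Good_base ζ N hE (by omega)
  obtain ⟨ψ, Λ', hJ, hne⟩ := Good_prop ζ ζ₂ hζ h12 N hE (hN₀ N hN hE) hG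
  have hlow := hJ.lower hζ hE hne (hN₀ N hN hE ζ le_rfl _ _ hJ) t t0 t1
  obtain ⟨j, hj⟩ := exists_overlap hU ψ hJ.unit
  have hJj := JEig_of_diag hU hD j
  refine ⟨j, ?_⟩
  have h3 : Λ' t * ((star fun σ => U σ j) ⬝ᵥ ψ) = Λ j t * ((star fun σ => U σ j) ⬝ᵥ ψ) := by
    have e1 : (star fun σ => U σ j) ⬝ᵥ (Tz N ζ t *ᵥ ψ) = Λ' t * ((star fun σ => U σ j) ⬝ᵥ ψ) := by
      rw [hJ.eig, dotProduct_smul]; rfl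
    rw [← e1, Matrix.dotProduct_mulVec, hJj.left, smul_dotProduct]; rfl
  have h4 : (star fun σ => U σ j) ⬝ᵥ ψ ≠ 0 := by
    intro h
    rw [h] at hj
    have : (0 : ℝ) < 1 / 2 ^ N := by positivity
    rw [norm_zero] at hj
    norm_num at hj
    have : (0 : ℝ) < 2 ^ N := by positivity
    linarith
  rw [← mul_right_cancel₀ h4 h3]
  exact hlow

end SixVertexFE

namespace SixVertexFE
open Matrix

lemma path_sum {X R : Type} [Fintype X] [DecidableEq X] [CommSemiring R] (n : ℕ) :
    ∀ (A : Fin n → Matrix X X R) (u v : X), (List.ofFn A).prod u v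
      = ∑ x : Fin n → X, (∏ i : Fin n, A i ((Fin.cons u x : Fin (n + 1) → X) i.castSucc)
          ((Fin.cons u x : Fin (n + 1) → X) i.succ))
          * (if (Fin.cons u x : Fin (n + 1) → X) (Fin.last n) = v then 1 else 0) := by
  induction n with
  | zero => intro A u v; simp [Matrix.one_apply]
  | succ n ih =>
    intro A u v
    rw [List.ofFn_succ, List.prod_cons, Matrix.mul_apply, sum_fin_succ]
    refine Finset.sum_congr rfl fun r _ => ?_
    rw [ih, Finset.mul_sum]
    refine Finset.sum_congr rfl fun x _ => ?_
    rw [Fin.prod_univ_succ, mul_assoc]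
    simp only [Fin.castSucc_zero, Fin.cons_zero, Fin.cons_succ, ← Fin.succ_castSucc, ← Fin.succ_last]

lemma cyclic_sum {X R : Type} [Fintype X] [DecidableEq X] [CommSemiring R] {n : ℕ} (hn : n ≠ 0)
    (A : Fin n → Matrix X X R) :
    ∑ x : Fin n → X, ∏ i, A i (x (predF i)) (x i) = ((List.ofFn A).prod).trace := by
  obtain ⟨m, rfl⟩ := Nat.exists_eq_succ_of_ne_zero hn
  simp only [Matrix.trace, Matrix.diag_apply, path_sum]
  rw [Finset.sum_comm]
  refine Finset.sum_congr rfl fun x _ => ?_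
  rw [Finset.sum_eq_single (x (Fin.last m))]
  · rw [← Fin.succ_last, Fin.cons_succ, if_pos rfl, mul_one]
    refine Finset.prod_congr rfl fun i _ => ?_
    rw [Fin.cons_succ]
    congr 1
    refine Fin.cases ?_ (fun k => ?_) i
    · rw [Fin.castSucc_zero, Fin.cons_zero]
      congr 1
      apply Fin.ext
      simp [predF]
    · rw [← Fin.succ_castSucc, Fin.cons_succ]
      congr 1
      apply Fin.ext
      simp only [predF, Fin.val_succ, Fin.val_castSucc]
      have := k.2
      rw [show (k : ℕ) + 1 + (m + 1 - 1) = k + (m + 1) by omega, Nat.add_mod_right, Nat.mod_eq_of_lt (by omega)]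
  · intro b _ hb
    rw [← Fin.succ_last, Fin.cons_succ, if_neg hb.symm, mul_zero]
  · simp

def Lr (a b c : ℝ) (s s' : Bool) : Matrix Bool Bool ℝ :=
  Matrix.of fun h h' => if h = h' then (if s = s' then (if h = s then a else b) else 0)
    else (if h = s' ∧ h' = s then c else 0)

def TR (a b c : ℝ) (N : ℕ) : Matrix (J N) (J N) ℝ :=
  Matrix.of fun σ τ => ∑ h : J N, ∏ i, Lr a b c (σ i) (τ i) (h (predF i)) (h i)

lemma TR_cast (a b c : ℝ) (N : ℕ) (hN : N ≠ 0) :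
    (TR a b c N).map (fun x : ℝ => (x : ℂ)) = TM (Lw a b c) N := by
  ext σ τ
  simp only [Matrix.map_apply, TR, Matrix.of_apply, TM, mono]
  push_cast
  rw [← cyclic_sum hN]
  refine Finset.sum_congr rfl fun h _ => Finset.prod_congr rfl fun i _ => ?_
  simp only [Lr, Lw, Matrix.of_apply]
  split_ifs <;> simp

lemma vertex_eq (a b c : ℝ) {N M : ℕ} (ω : Cfg N M) (v : Fin N × Fin M) :
    (if inArrows ω v = 2 then vWeight a b c ω v else 0)
      = Lr a b c (ω.2 (v.1, predF v.2)) (ω.2 v) (ω.1 (predF v.1, v.2)) (ω.1 v) := by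
  unfold vWeight inArrows Lr
  generalize ω.2 (v.1, predF v.2) = s
  generalize ω.2 v = s'
  generalize ω.1 (predF v.1, v.2) = h
  generalize ω.1 v = h'
  cases s <;> cases s' <;> cases h <;> cases h' <;> simp

lemma Z_trace (a b c : ℝ) (N M : ℕ) (hM : M ≠ 0) : Z N M a b c = (TR a b c N ^ M).trace := by
  have h1 : ∀ ω : Cfg N M, (if IsSixVertex ω then W a b c ω else 0)
      = ∏ j : Fin M, ∏ i : Fin N, Lr a b c (ω.2 (i, predF j)) (ω.2 (i, j)) (ω.1 (predF i, j)) (ω.1 (i, j)) := by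
    intro ω
    rw [Finset.prod_comm, ← Fintype.prod_prod_type (f := fun v : Fin N × Fin M =>
      Lr a b c (ω.2 (v.1, predF v.2)) (ω.2 (v.1, v.2)) (ω.1 (predF v.1, v.2)) (ω.1 (v.1, v.2)))]
    simp only [Prod.mk.eta, ← vertex_eq]
    by_cases hs : IsSixVertex ω
    · rw [if_pos hs]
      unfold W
      exact Finset.prod_congr rfl fun v _ => (if_pos (hs v)).symm
    · rw [if_neg hs]
      unfold IsSixVertex at hs
      push Not at hs
      obtain ⟨v, hv⟩ := hs
      exact (Finset.prod_eq_zero (Finset.mem_univ v) (if_neg hv)).symm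
  let e : (Fin M → J N) ≃ ((Fin N × Fin M) → Bool) :=
    { toFun := fun f v => f v.2 v.1
      invFun := fun g j i => g (i, j)
      left_inv := fun f => rfl
      right_inv := fun g => rfl }
  have h2 := cyclic_sum hM (fun _ : Fin M => TR a b c N)
  rw [List.ofFn_const, List.prod_replicate] at h2
  rw [← h2, Z]
  simp only [h1]
  rw [Fintype.sum_prod_type, Finset.sum_comm, ← e.sum_comp]
  refine Finset.sum_congr rfl fun x _ => ?_
  rw [← e.sum_comp]
  simp only [TR, Matrix.of_apply]
  rw [Finset.prod_univ_sum, Fintype.piFinset_univ]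
  rfl

end SixVertexFE

namespace SixVertexFE
open Matrix

lemma recurrence {ι : Type} [Fintype ι] (μ : ι → ℂ) (hμ : ∀ j, ‖μ j‖ = 1) :
    ∃ᶠ M : ℕ in atTop, ∀ j, 1 / 2 ≤ (μ j ^ M).re := by
  rw [frequently_atTop]
  intro M₀
  have hK : IsCompact (Metric.closedBall (0 : ι → ℂ) 1) := isCompact_closedBall _ _
  obtain ⟨x, _, φ, hφ, hx⟩ := hK.tendsto_subseq (x := fun k j => μ j ^ k) (by
    intro k
    rw [mem_closedBall_zero_iff, pi_norm_le_iff_of_nonneg zero_le_one]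
    intro j; simp [hμ])
  obtain ⟨K, hKc⟩ := Metric.cauchySeq_iff'.mp hx.cauchySeq (1 / 2) (by norm_num)
  have h1 := hKc (K + M₀) (by omega)
  have hmono : ∀ m, φ K + m ≤ φ (K + m) := by
    intro m
    induction m with
    | zero => simp
    | succ n ih =>
      have := hφ (show K + n < K + (n + 1) by omega)
      omega
  refine ⟨φ (K + M₀) - φ K, by have := hmono M₀; omega, fun j => ?_⟩
  have hle : φ K ≤ φ (K + M₀) := by have := hmono M₀; omega
  have h2 : dist (μ j ^ φ (K + M₀)) (μ j ^ φ K) < 1 / 2 :=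
    lt_of_le_of_lt (dist_le_pi_dist (fun j => μ j ^ φ (K + M₀)) (fun j => μ j ^ φ K) j) h1
  set m := φ (K + M₀) - φ K with hm
  rw [show φ (K + M₀) = φ K + m by omega, pow_add, dist_eq_norm,
    show μ j ^ φ K * μ j ^ m - μ j ^ φ K = μ j ^ φ K * (μ j ^ m - 1) by ring, norm_mul, norm_pow, hμ,
    one_pow, one_mul] at h2
  have h3 := Complex.abs_re_le_norm (μ j ^ m - 1)
  rw [Complex.sub_re, Complex.one_re] at h3
  have h4 := neg_abs_le ((μ j ^ m).re - 1)
  linarith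

section nonneg
variable {n : Type} [Fintype n] [DecidableEq n] {A : Matrix n n ℝ}

lemma pow_nonneg_entry (hA : ∀ i j, 0 ≤ A i j) (M : ℕ) : ∀ i j, 0 ≤ (A ^ M) i j := by
  induction M with
  | zero =>
    intro i j; rw [pow_zero, Matrix.one_apply]; split_ifs <;> norm_num
  | succ m ih =>
    intro i j
    rw [pow_succ, Matrix.mul_apply]
    exact Finset.sum_nonneg fun k _ => mul_nonneg (ih _ _) (hA _ _)

lemma pow_diag_super (hA : ∀ i j, 0 ≤ A i j) (M K : ℕ) (i : n) :
    (A ^ M) i i * (A ^ K) i i ≤ (A ^ (M + K)) i i := by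
  rw [pow_add, Matrix.mul_apply]
  exact Finset.single_le_sum (f := fun k => (A ^ M) i k * (A ^ K) k i)
    (fun k _ => mul_nonneg (pow_nonneg_entry hA _ _ _) (pow_nonneg_entry hA _ _ _)) (Finset.mem_univ i)

lemma pow_diag_pos (hA : ∀ i j, 0 ≤ A i j) (hd : ∀ i, 0 < A i i) (M : ℕ) (i : n) : 0 < (A ^ M) i i := by
  induction M with
  | zero => simp
  | succ m ih =>
    have := pow_diag_super hA m 1 i
    rw [pow_one] at this
    exact lt_of_lt_of_le (mul_pos ih (hd i)) this

lemma pow_entry_le (hA : ∀ i j, 0 ≤ A i j) (M : ℕ) : ∀ i j, (A ^ M) i j ≤ (1 + ∑ i, ∑ j, A i j) ^ M := by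
  have hS : 0 ≤ ∑ i, ∑ j, A i j := Finset.sum_nonneg fun i _ => Finset.sum_nonneg fun j _ => hA i j
  induction M with
  | zero =>
    intro i j; rw [pow_zero, Matrix.one_apply]; split_ifs <;> norm_num
  | succ m ih =>
    intro i j
    rw [pow_succ, Matrix.mul_apply, pow_succ]
    calc ∑ k, (A ^ m) i k * A k j ≤ ∑ k, (1 + ∑ i, ∑ j, A i j) ^ m * A k j :=
          Finset.sum_le_sum fun k _ => mul_le_mul_of_nonneg_right (ih i k) (hA k j)
      _ = (1 + ∑ i, ∑ j, A i j) ^ m * ∑ k, A k j := by rw [Finset.mul_sum]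
      _ ≤ _ := by
        gcongr
        have : ∑ k, A k j ≤ ∑ k, ∑ j, A k j := Finset.sum_le_sum fun k _ =>
          Finset.single_le_sum (f := fun j => A k j) (fun j _ => hA k j) (Finset.mem_univ j)
        linarith

lemma diag_limit (hA : ∀ i j, 0 ≤ A i j) (hd : ∀ i, 0 < A i i) (i : n) : ∃ ℓ : ℝ,
    Tendsto (fun M : ℕ => Real.log ((A ^ M) i i) / M) atTop (nhds ℓ) ∧
    ∀ M : ℕ, M ≠ 0 → Real.log ((A ^ M) i i) / M ≤ ℓ := by
  have hsub : Subadditive (fun M : ℕ => -Real.log ((A ^ M) i i)) := by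
    intro M K
    have h1 := pow_diag_super hA M K i
    have p1 := pow_diag_pos hA hd M i
    have p2 := pow_diag_pos hA hd K i
    have := Real.log_le_log (mul_pos p1 p2) h1
    rw [Real.log_mul p1.ne' p2.ne'] at this
    linarith
  have hS : 0 ≤ ∑ i, ∑ j, A i j := Finset.sum_nonneg fun i _ => Finset.sum_nonneg fun j _ => hA i j
  have hbdd : BddBelow (Set.range fun M : ℕ => (-Real.log ((A ^ M) i i)) / M) := by
    refine ⟨-Real.log (1 + ∑ i, ∑ j, A i j), ?_⟩
    rintro _ ⟨M, rfl⟩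
    have h1 := Real.log_le_log (pow_diag_pos hA hd M i) (pow_entry_le hA M i i)
    rw [Real.log_pow] at h1
    have hL : 0 ≤ Real.log (1 + ∑ i, ∑ j, A i j) := Real.log_nonneg (by linarith)
    rcases Nat.eq_zero_or_pos M with rfl | hM
    · simpa using hL
    · have hM' : (0 : ℝ) < M := by exact_mod_cast hM
      simp only
      rw [le_div_iff₀ hM']
      linarith
  refine ⟨-hsub.lim, ?_, fun M hM => ?_⟩
  · have := (hsub.tendsto_lim hbdd).neg
    refine this.congr fun M => ?_
    rw [neg_div, neg_neg]
  · have := hsub.lim_le_div hbdd hM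
    rw [neg_div] at this
    linarith

lemma trace_limit [Nonempty n] (hA : ∀ i j, 0 ≤ A i j) (hd : ∀ i, 0 < A i i) : ∃ ℓ : ℝ,
    Tendsto (fun M : ℕ => Real.log ((A ^ M).trace) / M) atTop (nhds ℓ) := by
  choose ℓ h1 h2 using diag_limit hA hd
  obtain ⟨i₀, hi₀⟩ := Finite.exists_max ℓ
  refine ⟨ℓ i₀, ?_⟩
  have hup : Tendsto (fun M : ℕ => Real.log (Fintype.card n) / M + ℓ i₀) atTop (nhds (ℓ i₀)) := by
    have := (tendsto_const_div_atTop_nhds_zero_nat (Real.log (Fintype.card n))).add_const (ℓ i₀)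
    simpa using this
  have hc : (0 : ℝ) < Fintype.card n := by exact_mod_cast Fintype.card_pos
  refine tendsto_of_tendsto_of_tendsto_of_le_of_le' (h1 i₀) hup ?_ ?_
  · filter_upwards [eventually_gt_atTop 0] with M hM
    gcongr
    · exact pow_diag_pos hA hd M i₀
    · exact Finset.single_le_sum (f := fun k => (A ^ M) k k)
        (fun k _ => pow_nonneg_entry hA _ _ _) (Finset.mem_univ i₀)
  · filter_upwards [eventually_gt_atTop 0] with M hM
    have hM' : (0 : ℝ) < M := by exact_mod_cast hM
    have hb : (A ^ M).trace ≤ Fintype.card n * Real.exp (M * ℓ i₀) := by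
      rw [Matrix.trace, ← nsmul_eq_mul]
      refine Finset.sum_le_card_nsmul _ _ _ fun i _ => ?_
      rw [Matrix.diag_apply, ← Real.log_le_iff_le_exp (pow_diag_pos hA hd M i)]
      have := h2 i M hM.ne'
      rw [div_le_iff₀ hM'] at this
      have := hi₀ i
      nlinarith
    have hp : 0 < (A ^ M).trace :=
      Finset.sum_pos (fun i _ => pow_diag_pos hA hd M i) Finset.univ_nonempty
    have := Real.log_le_log hp hb
    rw [Real.log_mul hc.ne' (Real.exp_pos _).ne', Real.log_exp] at this
    rw [div_add' _ _ _ hM'.ne']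
    gcongr
    linarith

lemma trace_upper [Nonempty n] {ℓ R : ℝ} {d : n → ℂ} (hR : 0 < R)
    (hpos : ∀ M, 0 < (A ^ M).trace)
    (hl : Tendsto (fun M : ℕ => Real.log ((A ^ M).trace) / M) atTop (nhds ℓ))
    (htr : ∀ M : ℕ, (((A ^ M).trace : ℝ) : ℂ) = ∑ j, d j ^ M) (hd : ∀ j, ‖d j‖ ≤ R) :
    ℓ ≤ Real.log R := by
  have hup : Tendsto (fun M : ℕ => Real.log (Fintype.card n) / M + Real.log R) atTop (nhds (Real.log R)) := by
    have := (tendsto_const_div_atTop_nhds_zero_nat (Real.log (Fintype.card n))).add_const (Real.log R)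
    simpa using this
  have hc : (0 : ℝ) < Fintype.card n := by exact_mod_cast Fintype.card_pos
  refine le_of_tendsto_of_tendsto hl hup ?_
  filter_upwards [eventually_gt_atTop 0] with M hM
  have hM' : (0 : ℝ) < M := by exact_mod_cast hM
  have hb : (A ^ M).trace ≤ Fintype.card n * R ^ M := by
    have h1 : ‖(((A ^ M).trace : ℝ) : ℂ)‖ ≤ Fintype.card n * R ^ M := by
      rw [htr, ← nsmul_eq_mul]
      refine (norm_sum_le _ _).trans (Finset.sum_le_card_nsmul _ _ _ fun j _ => ?_)
      rw [norm_pow]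
      exact pow_le_pow_left₀ (norm_nonneg _) (hd j) M
    rw [Complex.norm_real] at h1
    exact (le_abs_self _).trans h1
  have := Real.log_le_log (hpos M) hb
  rw [Real.log_mul hc.ne' (pow_pos hR M).ne', Real.log_pow] at this
  rw [div_add' _ _ _ hM'.ne']
  gcongr
  linarith

lemma trace_lower {ℓ r : ℝ} {d : n → ℂ} (hr : 0 < r)
    (hl : Tendsto (fun M : ℕ => Real.log ((A ^ M).trace) / M) atTop (nhds ℓ))
    (htr : ∀ M : ℕ, (((A ^ M).trace : ℝ) : ℂ) = ∑ j, d j ^ M) (j₀ : n) (hd : r ≤ ‖d j₀‖) :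
    Real.log r ≤ ℓ := by
  let μ : n → ℂ := fun j => if d j = 0 then 1 else d j / ‖d j‖
  have hμ : ∀ j, ‖μ j‖ = 1 := by
    intro j
    simp only [μ]
    split_ifs with h
    · simp
    · rw [norm_div, Complex.norm_real, norm_norm, div_self (norm_ne_zero_iff.mpr h)]
  have hdμ : ∀ j, d j = ‖d j‖ * μ j := by
    intro j
    simp only [μ]
    split_ifs with h
    · simp [h]
    · have : (‖d j‖ : ℂ) ≠ 0 := by exact_mod_cast norm_ne_zero_iff.mpr h
      field_simp
  have hlow : Tendsto (fun M : ℕ => Real.log ((A ^ M).trace) / M - Real.log (1 / 2) / M) atTop (nhds ℓ) := by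
    have := hl.sub (tendsto_const_div_atTop_nhds_zero_nat (Real.log (1 / 2)))
    simpa using this
  refine ge_of_tendsto_of_frequently hlow ?_
  refine ((recurrence μ hμ).and_eventually (eventually_gt_atTop 0)).mono ?_
  rintro M ⟨hM, hM0⟩
  have hM' : (0 : ℝ) < M := by exact_mod_cast hM0
  have hre : ∀ j, 1 / 2 * ‖d j‖ ^ M ≤ (d j ^ M).re := by
    intro j
    have e : d j ^ M = ((‖d j‖ ^ M : ℝ) : ℂ) * μ j ^ M := by
      conv_lhs => rw [hdμ j]
      rw [mul_pow]; push_cast; rfl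
    rw [e, Complex.re_ofReal_mul]
    have := hM j
    have : 0 ≤ ‖d j‖ ^ M := by positivity
    nlinarith
  have hb : 1 / 2 * r ^ M ≤ (A ^ M).trace := by
    have h1 := congrArg Complex.re (htr M)
    rw [Complex.ofReal_re, Complex.re_sum] at h1
    rw [h1]
    calc 1 / 2 * r ^ M ≤ 1 / 2 * ‖d j₀‖ ^ M := by gcongr
      _ ≤ (d j₀ ^ M).re := hre j₀
      _ ≤ _ := Finset.single_le_sum (f := fun j => (d j ^ M).re)
          (fun j _ => le_trans (by positivity) (hre j)) (Finset.mem_univ j₀)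
  have := Real.log_le_log (by positivity) hb
  rw [Real.log_mul (by norm_num) (pow_pos hr M).ne', Real.log_pow] at this
  rw [← sub_div, le_div_iff₀ hM']
  linarith

end nonneg

lemma TR_nonneg {a b c : ℝ} (ha : 0 < a) (hb : 0 < b) (hc : 0 < c) (N : ℕ) (σ τ : J N) :
    0 ≤ TR a b c N σ τ := by
  refine Finset.sum_nonneg fun h _ => Finset.prod_nonneg fun i _ => ?_
  simp only [Lr, Matrix.of_apply]
  split_ifs <;> linarith

lemma TR_diag {a b c : ℝ} (ha : 0 < a) (hb : 0 < b) (hc : 0 < c) (N : ℕ) (σ : J N) :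
    0 < TR a b c N σ σ := by
  refine Finset.sum_pos' (fun h _ => Finset.prod_nonneg fun i _ => ?_)
    ⟨fun _ => true, Finset.mem_univ _, Finset.prod_pos fun i _ => ?_⟩
  · simp only [Lr, Matrix.of_apply]
    split_ifs <;> linarith
  · simp only [Lr, Matrix.of_apply]
    split_ifs <;> linarith

lemma TM_Lw_scale (ζ ρ : ℝ) (t : ℝ) (N : ℕ) :
    TM (Lw ((ρ * Real.sinh (ζ - t) : ℝ) : ℂ) ((ρ * Real.sinh t : ℝ) : ℂ) ((ρ * Real.sinh ζ : ℝ) : ℂ)) N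
      = (ρ : ℂ) ^ N • Tz N ζ t := by
  rw [Tz, ← TM_smul]
  congr 1
  ext s s' i j
  simp only [Lz, Lw, Matrix.smul_apply, Matrix.of_apply, smul_eq_mul]
  split_ifs <;> push_cast <;> simp

lemma main_limit (ζ ρ t : ℝ) (hρ : 0 < ρ) (h0 : 0 < t) (h1 : t < ζ) :
    ∃ N₀ : ℕ, ∀ N : ℕ, Even N → 2 ≤ N → ∃ ℓ : ℝ,
      Tendsto (fun M : ℕ => Real.log (Z N M (ρ * Real.sinh (ζ - t)) (ρ * Real.sinh t) (ρ * Real.sinh ζ))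
        / (M * N)) atTop (nhds ℓ) ∧
      ℓ ≤ Real.log ρ + (Fz ζ t).re + Real.log 2 / N ∧
      (N₀ ≤ N → Real.log ρ + (Fz ζ t).re - Real.log 2 / N ≤ ℓ) := by
  have hζ : 0 < ζ := by linarith
  obtain ⟨N₀, hN₀⟩ := spectral ζ hζ
  refine ⟨N₀, fun N hE h2 => ?_⟩
  set a := ρ * Real.sinh (ζ - t) with ha
  set b := ρ * Real.sinh t with hb
  set c := ρ * Real.sinh ζ with hc
  have ha0 : 0 < a := mul_pos hρ (Real.sinh_pos_iff.mpr (by linarith))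
  have hb0 : 0 < b := mul_pos hρ (Real.sinh_pos_iff.mpr h0)
  have hc0 : 0 < c := mul_pos hρ (Real.sinh_pos_iff.mpr hζ)
  have hA := TR_nonneg ha0 hb0 hc0 N
  have hAd := TR_diag ha0 hb0 hc0 N
  obtain ⟨ℓ, hl⟩ := trace_limit hA hAd
  have hN0 : N ≠ 0 := by omega
  have hNp : (0 : ℝ) < N := by exact_mod_cast (show 0 < N by omega)
  obtain ⟨U, Λ, hU, hD⟩ := exists_joint N ζ hζ
  have hcast : (TR a b c N).map (fun x : ℝ => (x : ℂ)) = (ρ : ℂ) ^ N • Tz N ζ t := by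
    rw [TR_cast _ _ _ _ hN0, ha, hb, hc, TM_Lw_scale]
  have htr : ∀ M : ℕ, (((TR a b c N ^ M).trace : ℝ) : ℂ) = ∑ j, ((ρ : ℂ) ^ N * Λ j t) ^ M := by
    intro M
    have e1 : ((ρ : ℂ) ^ N • Tz N ζ t) * U = U * diagonal fun j => (ρ : ℂ) ^ N * Λ j t := by
      rw [Matrix.smul_mul, hD, ← Matrix.mul_smul]
      congr 1
      ext i j
      simp [Matrix.diagonal_apply]
    rw [← trace_pow_of_diag hU e1 M, ← hcast]
    have e2 := map_pow (Complex.ofRealHom.mapMatrix (m := J N)) (TR a b c N) M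
    have e3 : (TR a b c N).map (fun x : ℝ => (x : ℂ)) = Complex.ofRealHom.mapMatrix (TR a b c N) := rfl
    rw [e3, ← e2]
    simp [Matrix.trace]
  have hpos : ∀ M, 0 < (TR a b c N ^ M).trace := fun M =>
    Finset.sum_pos (fun i _ => pow_diag_pos hA hAd M i) Finset.univ_nonempty
  set F := (Fz ζ t).re with hF
  have hre0 : (0 : ℝ) ≤ ((t : ℂ)).re := by simpa using h0.le
  have hre1 : ((t : ℂ)).re ≤ ζ := by simpa using h1.le
  refine ⟨ℓ / N, ?_, ?_, fun hN => ?_⟩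
  · refine (hl.div_const (N : ℝ)).congr' ?_
    filter_upwards [eventually_gt_atTop 0] with M hM
    rw [Z_trace _ _ _ _ _ hM.ne', div_div]
  · have := trace_upper (R := ρ ^ N * (2 * Real.exp F ^ N)) (by positivity) hpos hl htr (fun j => by
      rw [norm_mul, norm_pow, Complex.norm_real, Real.norm_of_nonneg hρ.le]
      gcongr
      exact (JEig_of_diag hU hD j).upper hζ hE t hre0 hre1)
    rw [Real.log_mul (by positivity) (by positivity), Real.log_mul (by positivity) (by positivity),
      Real.log_pow, Real.log_pow, Real.log_exp] at this
    rw [div_le_iff₀ hNp]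
    calc ℓ ≤ _ := this
      _ = _ := by field_simp; ring
  · obtain ⟨j, hj⟩ := hN₀ N hN hE h2 U Λ hU hD t hre0 hre1
    have := trace_lower (r := ρ ^ N * (1 / 2 * Real.exp F ^ N)) (by positivity) hl htr j (by
      rw [norm_mul, norm_pow, Complex.norm_real, Real.norm_of_nonneg hρ.le]
      gcongr)
    rw [Real.log_mul (by positivity) (by positivity), Real.log_mul (by positivity) (by positivity),
      Real.log_pow, Real.log_pow, Real.log_exp, Real.log_div one_ne_zero two_ne_zero, Real.log_one] at this
    rw [le_div_iff₀ hNp]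
    calc _ = _ := by field_simp; ring
      _ ≤ ℓ := this

lemma main_fe (ζ ρ t : ℝ) (hρ : 0 < ρ) (h0 : 0 < t) (h1 : t < ζ) :
    FreeEnergyIs (ρ * Real.sinh (ζ - t)) (ρ * Real.sinh t) (ρ * Real.sinh ζ)
      (Real.log ρ + (Fz ζ t).re) := by
  obtain ⟨N₀, hN₀⟩ := main_limit ζ ρ t hρ h0 h1
  classical
  choose g hg using hN₀
  refine ⟨fun N => if h : Even N ∧ 2 ≤ N then g N h.1 h.2 else 0, fun N hE h2 => ?_, ?_⟩
  · beta_reduce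
    rw [dif_pos ⟨hE, h2⟩]; exact (hg N hE h2).1
  · have hz : Tendsto (fun N : ℕ => Real.log 2 / N) (atTop ⊓ Filter.principal {N | Even N}) (nhds 0) :=
      (tendsto_const_div_atTop_nhds_zero_nat (Real.log 2)).mono_left inf_le_left
    have hup := hz.const_add (Real.log ρ + (Fz ζ t).re)
    have hlo := hz.const_sub (Real.log ρ + (Fz ζ t).re)
    rw [add_zero] at hup
    rw [sub_zero] at hlo
    refine tendsto_of_tendsto_of_tendsto_of_le_of_le' hlo hup ?_ ?_
    · rw [eventually_inf_principal]
      filter_upwards [eventually_ge_atTop (max N₀ 2)] with N hN hE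
      have hE' : Even N := hE
      rw [dif_pos ⟨hE', (le_max_right _ _).trans hN⟩]
      exact (hg N _ _).2.2 ((le_max_left _ _).trans hN)
    · rw [eventually_inf_principal]
      filter_upwards [eventually_ge_atTop (max N₀ 2)] with N hN hE
      have hE' : Even N := hE
      rw [dif_pos ⟨hE', (le_max_right _ _).trans hN⟩]
      exact (hg N _ _).2.1

theorem free_energy_massive (a b c ζ θ : ℝ)
    (hb : 0 < b) (hab : b ≤ a) (hc : 0 < c)
    (hΔ : (a ^ 2 + b ^ 2 - c ^ 2) / (2 * a * b) < -1)
    (hζ0 : 0 < ζ)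
    (hζ : (a ^ 2 + b ^ 2 - c ^ 2) / (2 * a * b) = -Real.cosh ζ)
    (hθ0 : 0 < θ) (hθπ : θ < π)
    (hθ : a * Real.sinh (θ * ζ / π) = b * Real.sinh ((1 - θ / π) * ζ)) :
    FreeEnergyIs a b c
      (Real.log a + ζ * θ / π +
        ∑' n : ℕ, (Real.exp (-((n : ℝ) + 1) * ζ) / ((n : ℝ) + 1)) *
          (Real.sinh (2 * ((n : ℝ) + 1) * ζ * θ / π) / Real.cosh (((n : ℝ) + 1) * ζ))) := by
  have hπ := Real.pi_pos
  have ha : 0 < a := by linarith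
  set t := θ * ζ / π with ht
  have ht0 : 0 < t := by positivity
  have ht1 : t < ζ := by
    rw [ht, div_lt_iff₀ hπ]; nlinarith
  have e0 : (1 - θ / π) * ζ = ζ - t := by rw [ht]; ring
  rw [e0] at hθ
  have hs0 : 0 < Real.sinh t := Real.sinh_pos_iff.mpr ht0
  have hs1 : 0 < Real.sinh (ζ - t) := Real.sinh_pos_iff.mpr (by linarith)
  have hsζ : 0 < Real.sinh ζ := Real.sinh_pos_iff.mpr hζ0
  set ρ := b / Real.sinh t with hρ
  have hρ0 : 0 < ρ := by positivity
  have hbρ : b = ρ * Real.sinh t := by rw [hρ]; field_simp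
  have haρ : a = ρ * Real.sinh (ζ - t) := by
    have : a * Real.sinh t = ρ * Real.sinh (ζ - t) * Real.sinh t := by
      rw [hθ]; nth_rewrite 1 [hbρ]; ring
    exact mul_right_cancel₀ hs0.ne' this
  have hc2 : c ^ 2 = a ^ 2 + b ^ 2 + 2 * a * b * Real.cosh ζ := by
    rw [div_eq_iff (by positivity)] at hζ
    linarith
  have hcρ : c = ρ * Real.sinh ζ := by
    have : c ^ 2 = (ρ * Real.sinh ζ) ^ 2 := by
      have k1 : Real.sinh ζ = Real.sinh (ζ - t) * Real.cosh t + Real.cosh (ζ - t) * Real.sinh t := by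
        rw [← Real.sinh_add]; congr 1; ring
      have k2 : Real.cosh ζ = Real.cosh (ζ - t) * Real.cosh t + Real.sinh (ζ - t) * Real.sinh t := by
        rw [← Real.cosh_add]; congr 1; ring
      have k3 := Real.cosh_sq t
      have k4 := Real.cosh_sq (ζ - t)
      rw [hc2, haρ, hbρ, k2, k1]
      linear_combination (-ρ ^ 2 * Real.sinh (ζ - t) ^ 2) * k3 - ρ ^ 2 * Real.sinh t ^ 2 * k4
    exact (pow_left_inj₀ hc.le (by positivity) two_ne_zero).mp this
  have hfe := main_fe ζ ρ t hρ0 ht0 ht1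
  rw [← haρ, ← hbρ, ← hcρ] at hfe
  convert hfe using 1
  rw [← Fz_target ζ hζ0 t ht0 ht1]
  have hl : Real.log a = Real.log ρ + Real.log (Real.sinh (ζ - t)) := by
    rw [haρ, Real.log_mul hρ0.ne' hs1.ne']
  rw [hl, ← add_assoc, ← add_assoc]
  congr 1
  · rw [ht]; ring
  · refine tsum_congr fun n => ?_
    congr 3
    rw [ht]; ring

end SixVertexFE
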